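/- arXiv:2201.02488 — 2 statements merged into one kernel-verified Lean document; each statement's English description precedes it below -/
import Mathlib

section
/- Let (H, U) be a Z2-graded Hilbert space and let A, B ⊆ B(H) be unital *-subalgebras with UAU = A and UBU = B. Suppose ξ ∈ H is a cyclic vector for A with Uξ = ξ, and A ⊆ B^≀. Then the following are equivalent: (1) A^≀ = B^≀≀; (2) η_U(A_s)ξ + iB_sξ is dense in H; (3) the real orthogonal complement of η_U(A_s)ξ equals the closure of iB_sξ. -/
noncomputable section

open scoped InnerProductSpace ComplexOrder

/-- The even part `T₊ = (T + UTU)/2` and odd part `T₋ = (T - UTU)/2` of an operator on a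
`ℤ₂`-graded Hilbert space `(H, U)`;  the *twist automorphism* is `η_U(T) = T₊ + i U T₋`. -/
def twist {H : Type*} [NormedAddCommGroup H] [InnerProductSpace ℂ H]
    (U : H →L[ℂ] H) (T : H →L[ℂ] H) : H →L[ℂ] H :=
  (2⁻¹ : ℂ) • (T + U * T * U) + ((2⁻¹ : ℂ) * Complex.I) • (U * (T - U * T * U))

/-- The *twisted commutant* `M^≀ = η_U(M')` of a set of operators on a `ℤ₂`-graded Hilbert
space `(H, U)` (for `ad U`-invariant `M` this coincides with `η_U(M)'`). -/
def twistedComm {H : Type*} [NormedAddCommGroup H] [InnerProductSpace ℂ H]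
    (U : H →L[ℂ] H) (M : Set (H →L[ℂ] H)) : Set (H →L[ℂ] H) :=
  twist U '' Set.centralizer M

open ContinuousLinearMap in
theorem aux_amp {H : Type*} [NormedAddCommGroup H] [InnerProductSpace ℂ H]
    [CompleteSpace H] (D : StarSubalgebra ℂ (H →L[ℂ] H)) (v w : H) :
    ∃ p q r s : H →L[ℂ] H,
      p ∈ Set.centralizer (D : Set (H →L[ℂ] H)) ∧ q ∈ Set.centralizer (D : Set (H →L[ℂ] H)) ∧
      r ∈ Set.centralizer (D : Set (H →L[ℂ] H)) ∧ s ∈ Set.centralizer (D : Set (H →L[ℂ] H)) ∧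
      (p v + q w = v ∧ r v + s w = w) ∧
      (∀ a b, (∀ d ∈ D, ⟪d v, a⟫_ℂ + ⟪d w, b⟫_ℂ = 0) → p a + q b = 0) ∧
      (∀ a, ‖p a‖ ^ 2 ≤ (⟪a, p a⟫_ℂ).re) ∧ (∀ a, (⟪a, p a⟫_ℂ).re ≤ ‖a‖ ^ 2) ∧
      (∀ a b, ((p a + q b, r a + s b) : H × H) ∈
        closure ((fun d : H →L[ℂ] H => ((d v, d w) : H × H)) '' D)) := by
  let e := WithLp.prodContinuousLinearEquiv 2 ℂ H H
  let A : (H →L[ℂ] H) → (WithLp 2 (H × H) →L[ℂ] WithLp 2 (H × H)) := fun d =>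
    (e.symm : (H × H) →L[ℂ] _) ∘L (d.prodMap d) ∘L (e : _ →L[ℂ] (H × H))
  have hA : ∀ d a b, A d (WithLp.toLp 2 (a, b)) = WithLp.toLp 2 (d a, d b) := fun d a b => rfl
  have hAi : ∀ d x y, ⟪A d x, y⟫_ℂ = ⟪x, A (star d) y⟫_ℂ := by
    intro d x y
    simp only [WithLp.prod_inner_apply]
    have h1 : ∀ a b : H, ⟪d a, b⟫_ℂ = ⟪a, (star d) b⟫_ℂ := fun a b => by
      rw [star_eq_adjoint, adjoint_inner_right]
    exact congrArg₂ (· + ·) (h1 _ _) (h1 _ _)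
  let K0 : Submodule ℂ (WithLp 2 (H × H)) :=
    { carrier := (fun d : H →L[ℂ] H => WithLp.toLp 2 (d v, d w)) '' D
      add_mem' := by
        rintro _ _ ⟨d, hd, rfl⟩ ⟨d', hd', rfl⟩
        exact ⟨d + d', add_mem hd hd', rfl⟩
      zero_mem' := ⟨0, zero_mem D, rfl⟩
      smul_mem' := by
        rintro c _ ⟨d, hd, rfl⟩
        exact ⟨c • d, D.smul_mem hd c, rfl⟩ }
  let K := K0.topologicalClosure
  have hKinv : ∀ d ∈ D, ∀ x ∈ K, A d x ∈ K := by
    intro d hd x hx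
    refine map_mem_closure (A d).continuous hx ?_
    rintro _ ⟨d', hd', rfl⟩
    exact ⟨d * d', mul_mem hd hd', rfl⟩
  have hKo : ∀ d ∈ D, ∀ x ∈ Kᗮ, A d x ∈ Kᗮ := by
    intro d hd x hx
    rw [Submodule.mem_orthogonal'] at hx ⊢
    intro u hu
    rw [hAi]
    exact hx _ (hKinv _ (star_mem hd) _ hu)
  have : CompleteSpace K := K0.isClosed_topologicalClosure.completeSpace_coe
  let P := K.starProjection
  have hP : ∀ d ∈ D, ∀ x, P (A d x) = A d (P x) := by
    intro d hd x
    apply Submodule.eq_starProjection_of_mem_orthogonal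
    · exact hKinv d hd _ (Submodule.starProjection_apply_mem _ _)
    · rw [← map_sub]
      exact hKo d hd _ (Submodule.sub_starProjection_mem_orthogonal _)
  let i1 : H →L[ℂ] WithLp 2 (H × H) := (e.symm : (H × H) →L[ℂ] _) ∘L inl ℂ H H
  let i2 : H →L[ℂ] WithLp 2 (H × H) := (e.symm : (H × H) →L[ℂ] _) ∘L inr ℂ H H
  let f1 : WithLp 2 (H × H) →L[ℂ] H := fst ℂ H H ∘L (e : _ →L[ℂ] (H × H))
  let f2 : WithLp 2 (H × H) →L[ℂ] H := snd ℂ H H ∘L (e : _ →L[ℂ] (H × H))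
  have hi : ∀ a b, i1 a + i2 b = WithLp.toLp 2 (a, b) := by
    intro a b
    change WithLp.toLp 2 (a, (0:H)) + WithLp.toLp 2 ((0:H), b) = _
    rw [← WithLp.toLp_add]; simp
  have hAi1 : ∀ d a, i1 (d a) = A d (i1 a) := by
    intro d a
    change WithLp.toLp 2 (d a, (0:H)) = A d (WithLp.toLp 2 (a, (0:H)))
    rw [hA, map_zero]
  have hAi2 : ∀ d a, i2 (d a) = A d (i2 a) := by
    intro d a
    change WithLp.toLp 2 ((0:H), d a) = A d (WithLp.toLp 2 ((0:H), a))
    rw [hA, map_zero]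
  have hf1 : ∀ d x, f1 (A d x) = d (f1 x) := fun d x => rfl
  have hf2 : ∀ d x, f2 (A d x) = d (f2 x) := fun d x => rfl
  have hv : WithLp.toLp 2 (v, w) ∈ K :=
    K0.le_topologicalClosure ⟨1, one_mem D, rfl⟩
  have hpq : ∀ a b, (f1 ∘L P ∘L i1) a + (f1 ∘L P ∘L i2) b = f1 (P (WithLp.toLp 2 (a, b))) := by
    intro a b
    rw [← hi]; simp
  have hrs : ∀ a b, (f2 ∘L P ∘L i1) a + (f2 ∘L P ∘L i2) b = f2 (P (WithLp.toLp 2 (a, b))) := by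
    intro a b
    rw [← hi]; simp
  have hPv : P (WithLp.toLp 2 (v, w)) = WithLp.toLp 2 (v, w) :=
    Submodule.starProjection_eq_self_iff.mpr hv
  have hin : ∀ a, ⟪a, (f1 ∘L P ∘L i1) a⟫_ℂ = ⟪i1 a, P (i1 a)⟫_ℂ := by
    intro a
    rw [WithLp.prod_inner_apply]
    have h2 : (i1 a).ofLp.2 = 0 := rfl
    rw [h2, inner_zero_left, add_zero]; rfl
  have hin2 : ∀ a, (⟪a, (f1 ∘L P ∘L i1) a⟫_ℂ).re = ‖P (i1 a)‖ ^ 2 := by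
    intro a
    rw [hin, ← inner_self_eq_norm_sq (𝕜 := ℂ)]
    change _ = (⟪P (i1 a), P (i1 a)⟫_ℂ).re
    have := K.inner_starProjection_left_eq_right (i1 a) (P (i1 a))
    have h3 : P (P (i1 a)) = P (i1 a) :=
      Submodule.starProjection_eq_self_iff.mpr (Submodule.starProjection_apply_mem _ _)
    change ⟪P (i1 a), P (i1 a)⟫_ℂ = ⟪_, P (P (i1 a))⟫_ℂ at this
    rw [this, h3]
  have hnorm : ∀ x : WithLp 2 (H × H), ‖f1 x‖ ≤ ‖x‖ := by
    intro x
    have := WithLp.prod_norm_sq_eq_of_L2 x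
    have h1 : ‖f1 x‖ ^ 2 ≤ ‖x‖ ^ 2 := by
      rw [this]; exact le_add_of_nonneg_right (sq_nonneg _)
    exact (sq_le_sq₀ (norm_nonneg _) (norm_nonneg _)).1 h1
  have hnorm1 : ∀ a, ‖i1 a‖ = ‖a‖ := by
    intro a
    have := WithLp.prod_norm_sq_eq_of_L2 (i1 a)
    have h1 : ‖i1 a‖ ^ 2 = ‖a‖ ^ 2 + ‖(0:H)‖ ^ 2 := this
    rw [norm_zero] at h1
    exact (sq_eq_sq₀ (norm_nonneg _) (norm_nonneg _)).1 (by linarith)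
  refine ⟨f1 ∘L P ∘L i1, f1 ∘L P ∘L i2, f2 ∘L P ∘L i1, f2 ∘L P ∘L i2, ?_, ?_, ?_, ?_,
    ⟨?_, ?_⟩, ?_, ?_, ?_, ?_⟩
  · intro d hd
    ext a
    change d (f1 (P (i1 a))) = f1 (P (i1 (d a)))
    rw [hAi1, hP d hd, hf1]
  · intro d hd
    ext a
    change d (f1 (P (i2 a))) = f1 (P (i2 (d a)))
    rw [hAi2, hP d hd, hf1]
  · intro d hd
    ext a
    change d (f2 (P (i1 a))) = f2 (P (i1 (d a)))
    rw [hAi1, hP d hd, hf2]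
  · intro d hd
    ext a
    change d (f2 (P (i2 a))) = f2 (P (i2 (d a)))
    rw [hAi2, hP d hd, hf2]
  · rw [hpq, hPv]; rfl
  · rw [hrs, hPv]; rfl
  · intro a b hab
    rw [hpq]
    have : P (WithLp.toLp 2 (a, b)) = 0 := by
      apply Submodule.eq_starProjection_of_mem_orthogonal (zero_mem _)
      rw [sub_zero, Submodule.orthogonal_closure, Submodule.mem_orthogonal]
      rintro _ ⟨d, hd, rfl⟩
      exact hab d hd
    rw [this, map_zero]
  · intro a
    rw [hin2]
    exact pow_le_pow_left₀ (norm_nonneg _) (hnorm _) 2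
  · intro a
    rw [hin2, ← hnorm1 a]
    exact pow_le_pow_left₀ (norm_nonneg _) (K.norm_starProjection_apply_le _) 2
  · intro a b
    rw [hpq, hrs]
    have h1 : P (WithLp.toLp 2 (a, b)) ∈ K := Submodule.starProjection_apply_mem _ _
    have h2 := map_mem_closure (f := e) (t := (fun d : H →L[ℂ] H => ((d v, d w) : H × H)) '' D)
      e.continuous h1 (by
      rintro _ ⟨d, hd, rfl⟩
      exact ⟨d, hd, rfl⟩)
    exact h2

theorem aux_dc {H : Type*} [NormedAddCommGroup H] [InnerProductSpace ℂ H]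
    [CompleteSpace H] (D : StarSubalgebra ℂ (H →L[ℂ] H)) (v w : H) (b : H →L[ℂ] H)
    (hb : b ∈ Set.centralizer (Set.centralizer (D : Set (H →L[ℂ] H)))) :
    ((b v, b w) : H × H) ∈ closure ((fun d : H →L[ℂ] H => ((d v, d w) : H × H)) '' D) := by
  obtain ⟨p, q, r, s, hp, hq, hr, hs, ⟨h1, h2⟩, -, -, -, h⟩ := aux_amp D v w
  have e : ∀ t ∈ Set.centralizer (D : Set (H →L[ℂ] H)), ∀ x, t (b x) = b (t x) :=
    fun t ht x => congrArg (fun f : H →L[ℂ] H => f x) (hb t ht)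
  have := h (b v) (b w)
  rwa [e p hp, e q hq, e r hr, e s hs, ← map_add, ← map_add, h1, h2] at this

/-- self-adjoint real/imaginary decomposition inside a star subalgebra -/
theorem aux_sa {H : Type*} [NormedAddCommGroup H] [InnerProductSpace ℂ H]
    [CompleteSpace H] (D : StarSubalgebra ℂ (H →L[ℂ] H)) (d : H →L[ℂ] H) (hd : d ∈ D) :
    ∃ a ∈ D, ∃ b ∈ D, IsSelfAdjoint a ∧ IsSelfAdjoint b ∧ d = a + Complex.I • b := by
  refine ⟨realPart d, ?_, imaginaryPart d, ?_, (realPart d).2, (imaginaryPart d).2,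
    (realPart_add_I_smul_imaginaryPart d).symm⟩
  · rw [realPart_apply_coe, ← Complex.coe_smul]
    exact D.smul_mem (add_mem hd (star_mem hd)) _
  · rw [imaginaryPart_apply_coe, ← Complex.coe_smul]
    exact D.smul_mem (D.smul_mem (sub_mem hd (star_mem hd)) _) _

theorem aux_rvd1 {H : Type*} [NormedAddCommGroup H] [InnerProductSpace ℂ H]
    [CompleteSpace H] (C B : StarSubalgebra ℂ (H →L[ℂ] H)) (ξ : H)
    (hcyc : Dense ((fun T : H →L[ℂ] H => T ξ) '' C))
    (h : Set.centralizer (C : Set (H →L[ℂ] H)) =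
      Set.centralizer (Set.centralizer (B : Set (H →L[ℂ] H))))
    (x : H) (hx1 : ∀ c ∈ C, IsSelfAdjoint c → (⟪x, c ξ⟫_ℂ).re = 0)
    (hx2 : ∀ b ∈ B, IsSelfAdjoint b → (⟪x, Complex.I • b ξ⟫_ℂ).re = 0) : x = 0 := by
  have sa : ∀ c : H →L[ℂ] H, IsSelfAdjoint c → ∀ a b, ⟪c a, b⟫_ℂ = ⟪a, c b⟫_ℂ := by
    intro c hc a b
    have := ContinuousLinearMap.adjoint_inner_right c a b
    rw [← ContinuousLinearMap.star_eq_adjoint, hc.star_eq] at this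
    exact this.symm
  have k1 : ∀ c ∈ C, ⟪x, c ξ⟫_ℂ + ⟪ξ, c x⟫_ℂ = 0 := by
    have key : ∀ c ∈ C, IsSelfAdjoint c → ⟪x, c ξ⟫_ℂ + ⟪ξ, c x⟫_ℂ = 0 := by
      intro c hc hs
      rw [← sa c hs ξ x, ← inner_conj_symm (c ξ) x, Complex.add_conj, hx1 c hc hs]
      simp
    intro c hc
    obtain ⟨a, ha, b, hb, hsa, hsb, rfl⟩ := aux_sa C c hc
    have e1 := key a ha hsa
    have e2 := key b hb hsb
    simp only [add_apply, smul_apply, inner_add_right, inner_smul_right]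
    linear_combination e1 + Complex.I * e2
  have k2 : ∀ c ∈ B, ⟪x, c ξ⟫_ℂ - ⟪ξ, c x⟫_ℂ = 0 := by
    have key : ∀ c ∈ B, IsSelfAdjoint c → ⟪x, c ξ⟫_ℂ - ⟪ξ, c x⟫_ℂ = 0 := by
      intro c hc hs
      have := hx2 c hc hs
      rw [inner_smul_right] at this
      rw [← sa c hs ξ x, ← inner_conj_symm (c ξ) x, Complex.sub_conj]
      simp at this
      simp [this]
    intro c hc
    obtain ⟨a, ha, b, hb, hsa, hsb, rfl⟩ := aux_sa B c hc
    have e1 := key a ha hsa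
    have e2 := key b hb hsb
    simp only [add_apply, smul_apply, inner_add_right, inner_smul_right]
    linear_combination e1 + Complex.I * e2
  have k3 : ∀ b ∈ Set.centralizer (C : Set (H →L[ℂ] H)), ⟪x, b ξ⟫_ℂ = ⟪ξ, b x⟫_ℂ := by
    intro b hb
    rw [h] at hb
    have hm := aux_dc B ξ x b hb
    have hcl : IsClosed {z : H × H | ⟪x, z.1⟫_ℂ - ⟪ξ, z.2⟫_ℂ = 0} :=
      isClosed_eq (by fun_prop) continuous_const
    have := closure_minimal (s := (fun d : H →L[ℂ] H => ((d ξ, d x) : H × H)) '' B) (by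
      rintro _ ⟨d, hd, rfl⟩
      exact k2 d hd) hcl hm
    exact sub_eq_zero.1 this
  obtain ⟨p, q, r, s, hp, hq, hr, hs, ⟨h1, -⟩, h2, h3, h4, -⟩ := aux_amp C x ξ
  have h5 : p ξ + q x = 0 := by
    apply h2
    intro d hd
    have := k1 (star d) (star_mem hd)
    simpa only [ContinuousLinearMap.star_eq_adjoint, ContinuousLinearMap.adjoint_inner_right]
      using this
  have e1 : ⟪x, x⟫_ℂ = ⟪x, p x⟫_ℂ - ⟪ξ, p ξ⟫_ℂ := by
    have : ⟪x, p x + q ξ⟫_ℂ = ⟪x, x⟫_ℂ := by rw [h1]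
    rw [← this, inner_add_right, k3 q hq, eq_neg_of_add_eq_zero_right h5, inner_neg_right]
    ring
  have e2 : ‖x‖ ^ 2 = (⟪x, p x⟫_ℂ).re - (⟪ξ, p ξ⟫_ℂ).re := by
    rw [← Complex.sub_re, ← e1, ← inner_self_eq_norm_sq (𝕜 := ℂ)]; rfl
  have e3 : p ξ = 0 := by
    have := h3 ξ
    have := h4 x
    have h0 : ‖p ξ‖ ^ 2 = 0 := le_antisymm (by linarith) (sq_nonneg _)
    simpa using h0
  have e4 : ∀ y, p y = 0 := by
    have : (p : H → H) = fun _ => 0 := by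
      refine Continuous.ext_on hcyc p.continuous continuous_const ?_
      rintro _ ⟨c, hc, rfl⟩
      have := congrArg (fun f : H →L[ℂ] H => f ξ) (hp c hc)
      simp only [mul_apply_eq_comp, e3, map_zero] at this
      exact this.symm
    exact congrFun this
  rw [e4, e4, inner_zero_right, inner_zero_right] at e2
  simpa using e2

theorem aux_rvd2 {H : Type*} [NormedAddCommGroup H] [InnerProductSpace ℂ H]
    [CompleteSpace H] (C B : StarSubalgebra ℂ (H →L[ℂ] H)) (ξ : H)
    (hcyc : Dense ((fun T : H →L[ℂ] H => T ξ) '' C))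
    (hCB : ∀ c ∈ C, ∀ b ∈ B, c * b = b * c)
    (h : {x : H | ∀ c ∈ C, IsSelfAdjoint c → (⟪x, c ξ⟫_ℂ).re = 0} ⊆
        closure {z : H | ∃ R ∈ B, IsSelfAdjoint R ∧ z = Complex.I • (R ξ)}) :
    Set.centralizer (C : Set (H →L[ℂ] H)) =
      Set.centralizer (Set.centralizer (B : Set (H →L[ℂ] H))) := by
  have sa : ∀ c : H →L[ℂ] H, IsSelfAdjoint c → ∀ a b, ⟪c a, b⟫_ℂ = ⟪a, c b⟫_ℂ := by
    intro c hc a b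
    have := ContinuousLinearMap.adjoint_inner_right c a b
    rw [← ContinuousLinearMap.star_eq_adjoint, hc.star_eq] at this
    exact this.symm
  apply Set.Subset.antisymm
  swap
  · apply Set.centralizer_subset
    intro c hc b hb
    exact (hCB c hc b hb).symm
  have key : ∀ t ∈ Set.centralizer (C : Set (H →L[ℂ] H)), IsSelfAdjoint t →
      ∀ s ∈ Set.centralizer (B : Set (H →L[ℂ] H)), s * t = t * s := by
    intro t ht hts s hs
    have htc : ∀ c ∈ C, ∀ y, c (t y) = t (c y) := fun c hc y =>
      congrArg (fun f : H →L[ℂ] H => f y) (ht c hc)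
    have hsb : ∀ b ∈ B, ∀ y, b (s y) = s (b y) := fun c hc y =>
      congrArg (fun f : H →L[ℂ] H => f y) (hs c hc)
    have hcb : ∀ c ∈ C, ∀ b ∈ B, ∀ y, c (b y) = b (c y) := fun c hc b hb y =>
      congrArg (fun f : H →L[ℂ] H => f y) (hCB c hc b hb)
    have m1 : Complex.I • t ξ ∈ closure {z : H | ∃ R ∈ B, IsSelfAdjoint R ∧
        z = Complex.I • (R ξ)} := by
      apply h
      intro c hc hcs
      have e : ⟪t ξ, c ξ⟫_ℂ = ⟪c ξ, t ξ⟫_ℂ := by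
        rw [sa t hts, sa c hcs, htc c hc]
      have e' : (⟪t ξ, c ξ⟫_ℂ).im = 0 := by
        have h1 := inner_conj_symm (𝕜 := ℂ) (t ξ) (c ξ)
        rw [← e] at h1
        have := congrArg Complex.im h1
        simp only [Complex.conj_im] at this
        linarith
      rw [inner_smul_left]
      simp [e']
    have m2 : ∀ c ∈ C, ∀ d ∈ C, ⟪s (c (t ξ)), d ξ⟫_ℂ = ⟪s (c ξ), d (t ξ)⟫_ℂ := by
      intro c hc d hd
      have hcl : IsClosed {z : H | ⟪s (c z), d ξ⟫_ℂ = - ⟪s (c ξ), d z⟫_ℂ} :=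
        isClosed_eq (by fun_prop) (by fun_prop)
      have := closure_minimal (by
        rintro _ ⟨b, hb, hbs, rfl⟩
        change ⟪s (c _), d ξ⟫_ℂ = - ⟪s (c ξ), d _⟫_ℂ
        simp only [map_smul, inner_smul_left, inner_smul_right, Complex.conj_I]
        rw [hcb c hc b hb, ← hsb b hb, sa b hbs, hcb d hd b hb]
        ring) hcl m1
      change ⟪s (c _), d ξ⟫_ℂ = - ⟪s (c ξ), d _⟫_ℂ at this
      simp only [map_smul, inner_smul_left, inner_smul_right, Complex.conj_I] at this
      have hI := Complex.I_mul_I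
      linear_combination Complex.I * this + (⟪s (c (t ξ)), d ξ⟫_ℂ - ⟪s (c ξ), d (t ξ)⟫_ℂ) * hI
    apply ContinuousLinearMap.ext
    refine congrFun (Continuous.ext_on hcyc (s * t).continuous (t * s).continuous ?_)
    rintro _ ⟨c, hc, rfl⟩
    change s (t (c ξ)) = t (s (c ξ))
    have : (fun y => ⟪s (t (c ξ)), y⟫_ℂ) = fun y => ⟪t (s (c ξ)), y⟫_ℂ := by
      refine Continuous.ext_on hcyc (by fun_prop) (by fun_prop) ?_
      rintro _ ⟨d, hd, rfl⟩
      change ⟪s (t (c ξ)), d ξ⟫_ℂ = ⟪t (s (c ξ)), d ξ⟫_ℂ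
      rw [← htc c hc, m2 c hc d hd, sa t hts, htc d hd]
    exact ext_inner_right ℂ (congrFun this)
  intro t ht s hs
  let D : StarSubalgebra ℂ (H →L[ℂ] H) := StarSubalgebra.centralizer ℂ (C : Set (H →L[ℂ] H))
  have hD : ∀ y, y ∈ D ↔ y ∈ Set.centralizer (C : Set (H →L[ℂ] H)) := by
    intro y
    rw [StarSubalgebra.mem_centralizer_iff]
    refine ⟨fun hy c hc => (hy c hc).1, fun hy c hc => ⟨hy c hc, hy _ (star_mem hc)⟩⟩
  obtain ⟨a, ha, b, hb, hsa, hsb, rfl⟩ := aux_sa D t ((hD t).2 ht)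
  rw [mul_add, add_mul, key a ((hD a).1 ha) hsa s hs, mul_smul_comm, smul_mul_assoc,
    key b ((hD b).1 hb) hsb s hs]

theorem aux_real {H : Type*} [NormedAddCommGroup H] [InnerProductSpace ℂ H]
    [CompleteSpace H] (C B : StarSubalgebra ℂ (H →L[ℂ] H)) (ξ : H)
    (hcyc : Dense ((fun T : H →L[ℂ] H => T ξ) '' C))
    (hCB : ∀ c ∈ C, ∀ b ∈ B, c * b = b * c) :
    (Set.centralizer (C : Set (H →L[ℂ] H)) =
      Set.centralizer (Set.centralizer (B : Set (H →L[ℂ] H))) ↔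
      Dense {z : H | ∃ T ∈ C, ∃ R ∈ B, IsSelfAdjoint T ∧ IsSelfAdjoint R ∧
        z = T ξ + Complex.I • (R ξ)}) ∧
    (Set.centralizer (C : Set (H →L[ℂ] H)) =
      Set.centralizer (Set.centralizer (B : Set (H →L[ℂ] H))) ↔
      {x : H | ∀ T ∈ C, IsSelfAdjoint T → (⟪x, T ξ⟫_ℂ).re = 0} =
        closure {z : H | ∃ R ∈ B, IsSelfAdjoint R ∧ z = Complex.I • (R ξ)}) := by
  let _ : InnerProductSpace ℝ H := InnerProductSpace.complexToReal
  have hre : ∀ x y : H, ⟪x, y⟫_ℝ = (⟪x, y⟫_ℂ).re := fun x y => rfl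
  have sa : ∀ c : H →L[ℂ] H, IsSelfAdjoint c → ∀ a b, ⟪c a, b⟫_ℂ = ⟪a, c b⟫_ℂ := by
    intro c hc a b
    have := ContinuousLinearMap.adjoint_inner_right c a b
    rw [← ContinuousLinearMap.star_eq_adjoint, hc.star_eq] at this
    exact this.symm
  let KC : Submodule ℝ H :=
    { carrier := {z | ∃ T ∈ C, IsSelfAdjoint T ∧ z = T ξ}
      add_mem' := by
        rintro _ _ ⟨T, hT, hs, rfl⟩ ⟨T', hT', hs', rfl⟩
        exact ⟨T + T', add_mem hT hT', hs.add hs', rfl⟩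
      zero_mem' := ⟨0, zero_mem C, IsSelfAdjoint.zero _, rfl⟩
      smul_mem' := by
        rintro c _ ⟨T, hT, hs, rfl⟩
        refine ⟨(c : ℂ) • T, C.smul_mem hT _, ?_, rfl⟩
        rw [Complex.coe_smul]
        exact (IsSelfAdjoint.all c).smul hs }
  let KB : Submodule ℝ H :=
    { carrier := {z | ∃ R ∈ B, IsSelfAdjoint R ∧ z = Complex.I • R ξ}
      add_mem' := by
        rintro _ _ ⟨T, hT, hs, rfl⟩ ⟨T', hT', hs', rfl⟩
        exact ⟨T + T', add_mem hT hT', hs.add hs', by simp⟩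
      zero_mem' := ⟨0, zero_mem B, IsSelfAdjoint.zero _, by simp⟩
      smul_mem' := by
        rintro c _ ⟨T, hT, hs, rfl⟩
        refine ⟨(c : ℂ) • T, B.smul_mem hT _, ?_, ?_⟩
        · rw [Complex.coe_smul]
          exact (IsSelfAdjoint.all c).smul hs
        · change (c : ℂ) • Complex.I • T ξ = Complex.I • (c : ℂ) • T ξ
          rw [smul_comm] }
  have hKC : {x : H | ∀ T ∈ C, IsSelfAdjoint T → (⟪x, T ξ⟫_ℂ).re = 0} = (KCᗮ : Set H) := by
    ext x
    rw [SetLike.mem_coe, Submodule.mem_orthogonal']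
    constructor
    · rintro h _ ⟨T, hT, hs, rfl⟩
      exact h T hT hs
    · intro h T hT hs
      exact h _ ⟨T, hT, hs, rfl⟩
  have hBC : KB ≤ KCᗮ := by
    rintro _ ⟨R, hR, hRs, rfl⟩
    rw [Submodule.mem_orthogonal']
    rintro _ ⟨T, hT, hTs, rfl⟩
    have e : ⟪R ξ, T ξ⟫_ℂ = ⟪T ξ, R ξ⟫_ℂ := by
      rw [sa R hRs, sa T hTs]
      exact congrArg (fun f : H →L[ℂ] H => ⟪ξ, f ξ⟫_ℂ) (hCB T hT R hR).symm
    have e' : (⟪R ξ, T ξ⟫_ℂ).im = 0 := by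
      have h1 := inner_conj_symm (𝕜 := ℂ) (R ξ) (T ξ)
      rw [← e] at h1
      have := congrArg Complex.im h1
      simp only [Complex.conj_im] at this
      linarith
    rw [hre, inner_smul_left]
    simp [e']
  have hdense : Dense {z : H | ∃ T ∈ C, ∃ R ∈ B, IsSelfAdjoint T ∧ IsSelfAdjoint R ∧
        z = T ξ + Complex.I • (R ξ)} ↔ KCᗮ ⊓ KBᗮ = ⊥ := by
    have : {z : H | ∃ T ∈ C, ∃ R ∈ B, IsSelfAdjoint T ∧ IsSelfAdjoint R ∧
        z = T ξ + Complex.I • (R ξ)} = ((KC ⊔ KB : Submodule ℝ H) : Set H) := by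
      ext z
      rw [SetLike.mem_coe, Submodule.mem_sup]
      constructor
      · rintro ⟨T, hT, R, hR, hTs, hRs, rfl⟩
        exact ⟨_, ⟨T, hT, hTs, rfl⟩, _, ⟨R, hR, hRs, rfl⟩, rfl⟩
      · rintro ⟨_, ⟨T, hT, hTs, rfl⟩, _, ⟨R, hR, hRs, rfl⟩, rfl⟩
        exact ⟨T, hT, R, hR, hTs, hRs, rfl⟩
    rw [this, Submodule.dense_iff_topologicalClosure_eq_top,
      Submodule.topologicalClosure_eq_top_iff, Submodule.inf_orthogonal]
  have hcl : closure {z : H | ∃ R ∈ B, IsSelfAdjoint R ∧ z = Complex.I • (R ξ)} =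
      (KBᗮᗮ : Set H) := by
    rw [Submodule.orthogonal_orthogonal_eq_closure]; rfl
  have h3 : {x : H | ∀ T ∈ C, IsSelfAdjoint T → (⟪x, T ξ⟫_ℂ).re = 0} =
        closure {z : H | ∃ R ∈ B, IsSelfAdjoint R ∧ z = Complex.I • (R ξ)} ↔
        KCᗮ ⊓ KBᗮ = ⊥ := by
    rw [hKC, hcl, SetLike.coe_set_eq]
    constructor
    · intro h
      rw [h, inf_comm]
      exact Submodule.inf_orthogonal_eq_bot _
    · intro h
      have hle : KBᗮᗮ ≤ KCᗮ := by
        rw [Submodule.orthogonal_orthogonal_eq_closure]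
        exact KB.topologicalClosure_minimal hBC (Submodule.isClosed_orthogonal _)
      refine le_antisymm ?_ hle
      intro x hx
      have hy : KBᗮᗮ.starProjection x ∈ KBᗮᗮ := Submodule.starProjection_apply_mem _ _
      have hz : x - KBᗮᗮ.starProjection x ∈ KBᗮᗮᗮ :=
        Submodule.sub_starProjection_mem_orthogonal _
      rw [Submodule.triorthogonal_eq_orthogonal] at hz
      have : x - KBᗮᗮ.starProjection x ∈ KCᗮ ⊓ KBᗮ :=
        ⟨sub_mem hx (hle hy), hz⟩
      rw [h, Submodule.mem_bot, sub_eq_zero] at this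
      rw [this]; exact hy
  have h1 : Set.centralizer (C : Set (H →L[ℂ] H)) =
      Set.centralizer (Set.centralizer (B : Set (H →L[ℂ] H))) ↔ KCᗮ ⊓ KBᗮ = ⊥ := by
    constructor
    · intro h
      rw [Submodule.eq_bot_iff]
      rintro x ⟨hx1, hx2⟩
      refine aux_rvd1 C B ξ hcyc h x ?_ ?_
      · intro c hc hcs
        exact (Submodule.mem_orthogonal' _ _).1 hx1 _ ⟨c, hc, hcs, rfl⟩
      · intro c hc hcs
        exact (Submodule.mem_orthogonal' _ _).1 hx2 _ ⟨c, hc, hcs, rfl⟩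
    · intro h
      exact aux_rvd2 C B ξ hcyc hCB (h3.2 h).subset
  exact ⟨h1.trans hdense.symm, h1.trans h3.symm⟩

theorem aux_cent {R : Type*} [Ring R] (e : R ≃+* R) (M : Set R) :
    e '' Set.centralizer M = Set.centralizer (e '' M) := by
  ext y
  constructor
  · rintro ⟨x, hx, rfl⟩ _ ⟨m, hm, rfl⟩
    rw [← map_mul, ← map_mul, hx m hm]
  · intro hy
    refine ⟨e.symm y, fun m hm => e.injective ?_, e.apply_symm_apply y⟩
    simpa using hy (e m) ⟨m, hm, rfl⟩

theorem aux_twist {H : Type*} [NormedAddCommGroup H] [InnerProductSpace ℂ H]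
    [CompleteSpace H]
    (U : H →L[ℂ] H) (hUsa : star U = U) (hUunit : U * U = 1) :
    ∃ e : (H →L[ℂ] H) ≃⋆ₐ[ℂ] (H →L[ℂ] H), (∀ T, e T = twist U T) ∧
      (∀ T, e (e T) = U * T * U) ∧
      ∀ ξ, U ξ = ξ → ∀ D : Set (H →L[ℂ] H), Dense ((fun T : H →L[ℂ] H => T ξ) '' D) →
        Dense ((fun T : H →L[ℂ] H => T ξ) '' (e '' D)) := by
  let W0 : H →L[ℂ] H := (1 + Complex.I • U)
  let V0 : H →L[ℂ] H := (1 - Complex.I • U)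
  let c : ℂ := ((Real.sqrt 2)⁻¹ : ℝ)
  have hcc : c * c = 2⁻¹ := by
    simp only [c]
    rw [← Complex.ofReal_mul, ← mul_inv, Real.mul_self_sqrt (by norm_num)]; simp
  have hc : star c = c := Complex.conj_ofReal _
  have hc0 : c ≠ 0 := by
    intro h; rw [h] at hcc; norm_num at hcc
  have hWs : star (c • W0) = c • V0 := by
    rw [star_smul, hc]
    simp only [W0, V0, star_add, star_smul, star_one, hUsa]
    congr 1
    simp [sub_eq_add_neg]
  have hI : ∀ T : H →L[ℂ] H, Complex.I • Complex.I • T = -T := fun T => by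
    rw [smul_smul, Complex.I_mul_I, neg_one_smul]
  have hWV : W0 * V0 = (2 : ℂ) • 1 := by
    simp only [W0, V0, mul_sub, add_mul, one_mul, mul_one, smul_mul_assoc, mul_smul_comm, hUunit,
      smul_add, smul_sub, hI, two_smul]
    abel
  have hVW : V0 * W0 = (2 : ℂ) • 1 := by
    simp only [W0, V0, sub_mul, mul_add, one_mul, mul_one, smul_mul_assoc, mul_smul_comm, hUunit,
      smul_add, smul_sub, hI, two_smul]
    abel
  have hu : c • W0 ∈ unitary (H →L[ℂ] H) := by
    rw [Unitary.mem_iff, hWs]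
    constructor
    · rw [smul_mul_smul_comm, hVW, smul_smul, hcc]; norm_num
    · rw [smul_mul_smul_comm, hWV, smul_smul, hcc]; norm_num
  let e := Unitary.conjStarAlgAut ℂ (H →L[ℂ] H) ⟨c • W0, hu⟩
  have he : ∀ T, e T = (2⁻¹ : ℂ) • (W0 * T * V0) := by
    intro T
    change (c • W0) * T * star (c • W0) = _
    rw [hWs, smul_mul_assoc, smul_mul_smul_comm, hcc]
  have hUU : ∀ T : H →L[ℂ] H, U * (U * T) = T := fun T => by rw [← mul_assoc, hUunit, one_mul]
  have he2 : ∀ T, e T = twist U T := by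
    intro T
    rw [he]
    simp only [W0, V0, twist, mul_sub, add_mul, mul_one, one_mul, smul_mul_assoc, mul_smul_comm,
      mul_assoc, hUU, smul_add, smul_sub, hI, smul_neg, mul_smul]
    module
  refine ⟨e, he2, ?_, ?_⟩
  · intro T
    rw [he, he]
    have hW2 : W0 * W0 = (2 * Complex.I) • U := by
      simp only [W0, add_mul, mul_add, mul_one, one_mul, smul_mul_assoc, mul_smul_comm, hUunit,
        smul_add, smul_sub, hI]
      module
    have hV2 : V0 * V0 = (-(2 * Complex.I)) • U := by
      simp only [V0, sub_mul, mul_sub, mul_one, one_mul, smul_mul_assoc, mul_smul_comm, hUunit,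
        smul_add, smul_sub, hI]
      module
    have : W0 * (W0 * T * V0) * V0 = (4 : ℂ) • (U * T * U) := by
      calc _ = (W0 * W0) * T * (V0 * V0) := by simp only [mul_assoc]
        _ = _ := by
          rw [hW2, hV2, smul_mul_assoc, smul_mul_smul_comm]
          congr 1
          linear_combination (-4 : ℂ) * Complex.I_mul_I
    rw [mul_smul_comm, smul_mul_assoc, this, smul_smul, smul_smul]
    norm_num
  · intro ξ hξ D hD
    have hd : (1 - Complex.I : ℂ) ≠ 0 := by
      intro h
      have := congrArg Complex.re h
      simp at this
    have hV : V0 ξ = (1 - Complex.I) • ξ := by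
      change ξ - Complex.I • U ξ = _
      rw [hξ, sub_smul, one_smul]
    let f : H → H := fun y => (2⁻¹ : ℂ) • W0 ((1 - Complex.I : ℂ) • y)
    have hf : Continuous f := by fun_prop
    have hs : Function.Surjective f := by
      intro z
      refine ⟨(1 - Complex.I : ℂ)⁻¹ • V0 z, ?_⟩
      simp only [f]
      rw [smul_smul, mul_inv_cancel₀ hd, one_smul]
      have := congrArg (fun g : H →L[ℂ] H => g z) hWV
      change W0 (V0 z) = (2 : ℂ) • z at this
      rw [this, smul_smul]; norm_num
    refine (hs.denseRange.dense_image hf hD).mono ?_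
    rintro _ ⟨_, ⟨T, hT, rfl⟩, rfl⟩
    refine ⟨e T, ⟨T, hT, rfl⟩, ?_⟩
    simp only [he, f]
    change (2⁻¹ : ℂ) • W0 (T (V0 ξ)) = _
    rw [hV, map_smul]

/-- Lemma 4.2, a twisted Rieffel–van Daele lemma.  Let `(H, U)` be a
`ℤ₂`-graded Hilbert space, `SA, SB ⊆ B(H)` unital `*`-subalgebras invariant under `ad U`,
`ξ` an even vector cyclic for `SA`, and suppose `SA ⊆ SB^≀`.  Then the following are
equivalent: (1) `SA^≀ = SB^≀≀`; (2) `η_U((SA)_s) ξ + i (SB)_s ξ` is dense in `H`;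
(3) the real orthogonal complement of `η_U((SA)_s) ξ` is the closure of `i (SB)_s ξ`. -/
theorem statement15 {H : Type*} [NormedAddCommGroup H] [InnerProductSpace ℂ H]
    [CompleteSpace H]
    (U : H →L[ℂ] H) (hUsa : star U = U) (hUunit : U * U = 1)
    (SA SB : StarSubalgebra ℂ (H →L[ℂ] H))
    (hSA : (fun T : H →L[ℂ] H => U * T * U) '' SA = SA)
    (hSB : (fun T : H →L[ℂ] H => U * T * U) '' SB = SB)
    (ξ : H) (hξ : U ξ = ξ)
    (hcyc : Dense ((fun T : H →L[ℂ] H => T ξ) '' SA))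
    (hAB : (SA : Set (H →L[ℂ] H)) ⊆ twistedComm U SB) :
    (twistedComm U SA = twistedComm U (twistedComm U SB) ↔
      Dense {z : H | ∃ T ∈ SA, ∃ R ∈ SB, IsSelfAdjoint T ∧ IsSelfAdjoint R ∧
        z = twist U T ξ + Complex.I • (R ξ)}) ∧
    (twistedComm U SA = twistedComm U (twistedComm U SB) ↔
      {x : H | ∀ T ∈ SA, IsSelfAdjoint T → (⟪x, twist U T ξ⟫_ℂ).re = 0} =
        closure {z : H | ∃ R ∈ SB, IsSelfAdjoint R ∧ z = Complex.I • (R ξ)}) := by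
  obtain ⟨e, he, hee, hd⟩ := aux_twist U hUsa hUunit
  have het : twist U = e := (funext he).symm
  have hU2 : ∀ S : StarSubalgebra ℂ (H →L[ℂ] H),
      (fun T : H →L[ℂ] H => U * T * U) '' S = S → e '' (e '' S) = S := by
    intro S hS
    rw [Set.image_image]
    simp only [hee]
    exact hS
  have hce : ∀ M : Set (H →L[ℂ] H), e '' Set.centralizer M = Set.centralizer (e '' M) :=
    fun M => aux_cent (e : (H →L[ℂ] H) ≃+* (H →L[ℂ] H)) M
  let C : StarSubalgebra ℂ (H →L[ℂ] H) := SA.map (StarAlgHomClass.toStarAlgHom e)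
  have hC : (C : Set (H →L[ℂ] H)) = e '' SA := rfl
  have hCB : ∀ c ∈ C, ∀ b ∈ SB, c * b = b * c := by
    rintro _ ⟨a, ha, rfl⟩ b hb
    obtain ⟨t, ht, hta⟩ := hAB ha
    have h1 : e a ∈ Set.centralizer (SB : Set (H →L[ℂ] H)) := by
      rw [← hU2 SB hSB, ← hce, ← hce]
      rw [het] at hta
      exact ⟨a, ⟨t, ht, hta⟩, rfl⟩
    exact (h1 b hb).symm
  have hcycC : Dense ((fun T : H →L[ℂ] H => T ξ) '' C) := hd ξ hξ _ hcyc
  have main := aux_real C SB ξ hcycC hCB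
  have e1 : twistedComm U SA = Set.centralizer (C : Set (H →L[ℂ] H)) := by
    rw [twistedComm, het, hce]; rfl
  have e2 : twistedComm U (twistedComm U SB) =
      Set.centralizer (Set.centralizer (SB : Set (H →L[ℂ] H))) := by
    rw [twistedComm, twistedComm, het, hce, hce, hce, hU2 SB hSB]
  have hsa : ∀ T, IsSelfAdjoint (e T) ↔ IsSelfAdjoint T := by
    intro T
    have h1 : e (star T) = star (e T) := e.map_star' T
    have hinj : Function.Injective e := EquivLike.injective e
    rw [IsSelfAdjoint, IsSelfAdjoint, ← h1, hinj.eq_iff]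
  have e3 : {z : H | ∃ T ∈ SA, ∃ R ∈ SB, IsSelfAdjoint T ∧ IsSelfAdjoint R ∧
        z = twist U T ξ + Complex.I • (R ξ)} = {z : H | ∃ T ∈ C, ∃ R ∈ SB, IsSelfAdjoint T ∧
        IsSelfAdjoint R ∧ z = T ξ + Complex.I • (R ξ)} := by
    ext z
    constructor
    · rintro ⟨T, hT, R, hR, hTs, hRs, rfl⟩
      exact ⟨e T, ⟨T, hT, rfl⟩, R, hR, (hsa T).2 hTs, hRs, by rw [he]⟩
    · rintro ⟨_, ⟨T, hT, rfl⟩, R, hR, hTs, hRs, rfl⟩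
      exact ⟨T, hT, R, hR, (hsa T).1 hTs, hRs, by rw [← he]; rfl⟩
  have e4 : {x : H | ∀ T ∈ SA, IsSelfAdjoint T → (⟪x, twist U T ξ⟫_ℂ).re = 0} =
      {x : H | ∀ T ∈ C, IsSelfAdjoint T → (⟪x, T ξ⟫_ℂ).re = 0} := by
    ext x
    constructor
    · rintro h _ ⟨T, hT, rfl⟩ hTs
      have := h T hT ((hsa T).1 hTs)
      rw [← he] at this
      exact this
    · intro h T hT hTs
      rw [← he]
      exact h (e T) ⟨T, hT, rfl⟩ ((hsa T).2 hTs)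
  rw [e1, e2, e3, e4]
  exact main


end
end

section
/- Let M ⊆ B(H) and N ⊆ B(K) be von Neumann algebras on Z2-graded Hilbert spaces (H, U) and (K, V) with UMU = M and VNV = N. Then the twisted commutant of the Fermi tensor product satisfies (M ⊗̂ N)^≀ = M^≀ ⊗̂ N^≀, where the grading on H ⊗ K is given by U ⊗ V. -/
noncomputable section

open scoped InnerProductSpace ComplexOrder

/-- For operators `T ∈ B(H)`, `S ∈ B(K)`, homogeneous with parities `sT`, `sS` relative to the
gradings `U`, `V`, the predicate stating that `P ∈ B(HK)` is the Fermi tensor product operator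
`T ⊗̂ S` relative to the realization `tp` of the Hilbert tensor product `H ⊗ K`:
`(T ⊗̂ S)(x ⊗ y) = ε(S, x) (T x ⊗ S y)` with `ε(S, x) = -1` iff both `S` and `x` are odd. -/
def IsFermiTensorOp {H K HK : Type*}
    [NormedAddCommGroup H] [InnerProductSpace ℂ H]
    [NormedAddCommGroup K] [InnerProductSpace ℂ K]
    [NormedAddCommGroup HK] [InnerProductSpace ℂ HK]
    (U : H →L[ℂ] H) (V : K →L[ℂ] K) (tp : H →ₗ[ℂ] K →ₗ[ℂ] HK)
    (T : H →L[ℂ] H) (S : K →L[ℂ] K) (P : HK →L[ℂ] HK) : Prop :=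
  ∃ sT sS : Bool,
    U * T * U = cond sT (-T) T ∧ V * S * V = cond sS (-S) S ∧
    ∀ (x : H) (y : K) (sx : Bool), U x = cond sx (-x) x →
      P (tp x y) = (cond (sS && sx) (-1 : ℂ) 1) • tp (T x) (S y)

/-- The set of Fermi tensor product operators `T ⊗̂ S` with `T ∈ M`, `S ∈ N` homogeneous;
the Fermi tensor product `M ⊗̂ N` of graded von Neumann algebras is the von Neumann algebra
it generates, i.e. its double commutant. -/
def fermiGen {H K HK : Type*}
    [NormedAddCommGroup H] [InnerProductSpace ℂ H]
    [NormedAddCommGroup K] [InnerProductSpace ℂ K]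
    [NormedAddCommGroup HK] [InnerProductSpace ℂ HK]
    (U : H →L[ℂ] H) (V : K →L[ℂ] K) (tp : H →ₗ[ℂ] K →ₗ[ℂ] HK)
    (M : Set (H →L[ℂ] H)) (N : Set (K →L[ℂ] K)) : Set (HK →L[ℂ] HK) :=
  {P : HK →L[ℂ] HK | ∃ T ∈ M, ∃ S ∈ N, IsFermiTensorOp U V tp T S P}


/-! ### Tensor products of operators -/

structure IsTP {H K HK : Type*}
    [NormedAddCommGroup H] [InnerProductSpace ℂ H]
    [NormedAddCommGroup K] [InnerProductSpace ℂ K]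
    [NormedAddCommGroup HK] [InnerProductSpace ℂ HK]
    (tp : H →ₗ[ℂ] K →ₗ[ℂ] HK) : Prop where
  inner : ∀ (x x' : H) (y y' : K), ⟪tp x y, tp x' y'⟫_ℂ = ⟪x, x'⟫_ℂ * ⟪y, y'⟫_ℂ
  dense : Dense (Submodule.span ℂ {z : HK | ∃ x y, z = tp x y} : Set HK)

section tens

variable {H K HK : Type*}
    [NormedAddCommGroup H] [InnerProductSpace ℂ H]
    [NormedAddCommGroup K] [InnerProductSpace ℂ K]
    [NormedAddCommGroup HK] [InnerProductSpace ℂ HK]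
    {tp : H →ₗ[ℂ] K →ₗ[ℂ] HK}

theorem IsTP.ext (h : IsTP tp) {P Q : HK →L[ℂ] HK}
    (hPQ : ∀ x y, P (tp x y) = Q (tp x y)) : P = Q := by
  apply ContinuousLinearMap.ext_on h.dense
  rintro z ⟨x, y, rfl⟩
  exact hPQ x y

theorem IsTP.eq_zero (h : IsTP tp) {z : HK} (hz : ∀ x y, ⟪tp x y, z⟫_ℂ = 0) : z = 0 := by
  have : (innerSL ℂ z) = 0 := by
    apply ContinuousLinearMap.ext_on h.dense
    rintro w ⟨x, y, rfl⟩
    simp only [innerSL_apply_apply, zero_apply]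
    rw [← inner_conj_symm, hz, map_zero]
  have h2 := congrArg (fun f => f z) this
  simpa using h2

theorem IsTP.norm (h : IsTP tp) (x : H) (y : K) : ‖tp x y‖ = ‖x‖ * ‖y‖ := by
  have h1 := h.inner x x y y
  simp only [inner_self_eq_norm_sq_to_K] at h1
  have h2 : ‖tp x y‖ ^ 2 = (‖x‖ * ‖y‖) ^ 2 := by
    have : ((‖tp x y‖ ^ 2 : ℝ) : ℂ) = (((‖x‖ * ‖y‖) ^ 2 : ℝ) : ℂ) := by
      push_cast
      rw [mul_pow]
      exact h1
    exact_mod_cast this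
  exact (sq_eq_sq₀ (norm_nonneg _) (by positivity)).1 h2

theorem IsTP.exists_tens [CompleteSpace HK] (h : IsTP tp) (T : H →L[ℂ] H) (S : K →L[ℂ] K) :
    ∃ P : HK →L[ℂ] HK, (∀ x y, P (tp x y) = tp (T x) (S y)) ∧ ‖P‖ ≤ ‖T‖ * ‖S‖ := by
  have hin : ∀ a b : TensorProduct ℂ H K,
      ⟪TensorProduct.lift tp a, TensorProduct.lift tp b⟫_ℂ = ⟪a, b⟫_ℂ := by
    intro a b
    induction a using TensorProduct.induction_on with
    | zero => simp
    | add a a' h1 h2 => simp [inner_add_left, h1, h2]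
    | tmul x y =>
      induction b using TensorProduct.induction_on with
      | zero => simp
      | add a a' h1 h2 => rw [map_add, inner_add_right, inner_add_right, h1, h2]
      | tmul x' y' => simp [h.inner]
  let j : TensorProduct ℂ H K →ₗᵢ[ℂ] HK := (TensorProduct.lift tp).isometryOfInner hin
  have hjd : DenseRange j := by
    refine h.dense.mono ?_
    have : Submodule.span ℂ {z : HK | ∃ x y, z = tp x y} ≤ LinearMap.range j.toLinearMap := by
      rw [Submodule.span_le]
      rintro z ⟨x, y, rfl⟩
      exact ⟨x ⊗ₜ y, by simp [j]⟩
    intro z hz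
    obtain ⟨w, hw⟩ := this hz
    exact ⟨w, hw⟩
  have hju : IsUniformInducing j.toContinuousLinearMap := j.isometry.isUniformInducing
  let f : TensorProduct ℂ H K →L[ℂ] HK :=
    j.toContinuousLinearMap.comp (TensorProduct.mapL T S)
  have hf : ∀ a, ‖f a‖ ≤ (‖T‖ * ‖S‖) * ‖a‖ := by
    intro a
    have : ‖f a‖ = ‖TensorProduct.mapL T S a‖ := j.norm_map _
    rw [this]
    exact ((TensorProduct.mapL T S).le_opNorm a).trans
      (mul_le_mul_of_nonneg_right (TensorProduct.norm_mapL_le T S) (norm_nonneg _))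
  have hex : ∀ a, (f.extend j.toContinuousLinearMap) (j a) = f a := fun a =>
    ContinuousLinearMap.extend_eq f hjd hju a
  refine ⟨f.extend j.toContinuousLinearMap, ?_, ?_⟩
  · intro x y
    have h1 : tp x y = j (x ⊗ₜ y) := by simp [j]
    rw [h1, hex]
    simp [f, j]
  · refine ContinuousLinearMap.opNorm_le_bound _ (by positivity) ?_
    intro z
    refine hjd.induction_on (p := fun z => ‖(f.extend j.toContinuousLinearMap) z‖ ≤
      ‖T‖ * ‖S‖ * ‖z‖) z ?_ ?_
    · exact isClosed_le (by fun_prop) (by fun_prop)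
    · intro a
      rw [hex, j.norm_map]
      exact hf a

open Classical in
/-- `T ⊗ S` as an operator on `HK`. -/
def tens (tp : H →ₗ[ℂ] K →ₗ[ℂ] HK) (T : H →L[ℂ] H) (S : K →L[ℂ] K) : HK →L[ℂ] HK :=
  if h : ∃ P : HK →L[ℂ] HK, (∀ x y, P (tp x y) = tp (T x) (S y)) ∧ ‖P‖ ≤ ‖T‖ * ‖S‖ then
    h.choose else 0

variable [CompleteSpace HK]

theorem IsTP.tens_apply (h : IsTP tp) (T : H →L[ℂ] H) (S : K →L[ℂ] K) (x : H) (y : K) :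
    tens tp T S (tp x y) = tp (T x) (S y) := by
  have := h.exists_tens T S
  rw [tens, dif_pos this]
  exact this.choose_spec.1 x y

theorem IsTP.tens_norm (h : IsTP tp) (T : H →L[ℂ] H) (S : K →L[ℂ] K) :
    ‖tens tp T S‖ ≤ ‖T‖ * ‖S‖ := by
  have := h.exists_tens T S
  rw [tens, dif_pos this]
  exact this.choose_spec.2

theorem IsTP.tens_one (h : IsTP tp) : tens tp 1 1 = 1 :=
  h.ext fun x y => by simp [h.tens_apply]

theorem IsTP.tens_mul (h : IsTP tp) (T T' : H →L[ℂ] H) (S S' : K →L[ℂ] K) :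
    tens tp T S * tens tp T' S' = tens tp (T * T') (S * S') :=
  h.ext fun x y => by simp [h.tens_apply]

theorem IsTP.tens_add_left (h : IsTP tp) (T T' : H →L[ℂ] H) (S : K →L[ℂ] K) :
    tens tp (T + T') S = tens tp T S + tens tp T' S :=
  h.ext fun x y => by simp [h.tens_apply]

theorem IsTP.tens_add_right (h : IsTP tp) (T : H →L[ℂ] H) (S S' : K →L[ℂ] K) :
    tens tp T (S + S') = tens tp T S + tens tp T S' :=
  h.ext fun x y => by simp [h.tens_apply]

theorem IsTP.tens_smul_left (h : IsTP tp) (c : ℂ) (T : H →L[ℂ] H) (S : K →L[ℂ] K) :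
    tens tp (c • T) S = c • tens tp T S :=
  h.ext fun x y => by simp [h.tens_apply]

theorem IsTP.tens_smul_right (h : IsTP tp) (c : ℂ) (T : H →L[ℂ] H) (S : K →L[ℂ] K) :
    tens tp T (c • S) = c • tens tp T S :=
  h.ext fun x y => by simp [h.tens_apply]

theorem IsTP.tens_neg_left (h : IsTP tp) (T : H →L[ℂ] H) (S : K →L[ℂ] K) :
    tens tp (-T) S = - tens tp T S :=
  h.ext fun x y => by simp [h.tens_apply]

theorem IsTP.tens_neg_right (h : IsTP tp) (T : H →L[ℂ] H) (S : K →L[ℂ] K) :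
    tens tp T (-S) = - tens tp T S :=
  h.ext fun x y => by simp [h.tens_apply]

theorem IsTP.tens_star [CompleteSpace H] [CompleteSpace K] (h : IsTP tp)
    (T : H →L[ℂ] H) (S : K →L[ℂ] K) :
    star (tens tp T S) = tens tp (star T) (star S) := by
  refine h.ext fun x y => ?_
  rw [← sub_eq_zero]
  refine h.eq_zero fun x' y' => ?_
  rw [inner_sub_right, ContinuousLinearMap.star_eq_adjoint,
    ContinuousLinearMap.adjoint_inner_right, h.tens_apply, h.tens_apply, h.inner, h.inner,
    ContinuousLinearMap.star_eq_adjoint, ContinuousLinearMap.star_eq_adjoint,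
    ContinuousLinearMap.adjoint_inner_right, ContinuousLinearMap.adjoint_inner_right, sub_self]

end tens

section lemI

theorem map_mem_clspan {E : Type*} [NormedAddCommGroup E] [InnerProductSpace ℂ E]
    (S : Set E) (D : E →L[ℂ] E) (h1 : ∀ s ∈ S, D s ∈ S) {x : E}
    (hx : x ∈ (Submodule.span ℂ S).topologicalClosure) :
    D x ∈ (Submodule.span ℂ S).topologicalClosure := by
  have hx' : x ∈ closure ((Submodule.span ℂ S : Submodule ℂ E) : Set E) := hx
  change D x ∈ closure ((Submodule.span ℂ S : Submodule ℂ E) : Set E)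
  refine map_mem_closure D.continuous hx' ?_
  intro y hy
  have : Submodule.span ℂ S ≤ (Submodule.span ℂ S).comap D.toLinearMap := by
    rw [Submodule.span_le]
    intro s hs
    exact Submodule.subset_span (h1 s hs)
  exact this hy

theorem comm_proj {E : Type*} [NormedAddCommGroup E] [InnerProductSpace ℂ E] [CompleteSpace E]
    (S : Set E) (D D' : E →L[ℂ] E) (hD : ∀ x y, ⟪D x, y⟫_ℂ = ⟪x, D' y⟫_ℂ)
    (h1 : ∀ s ∈ S, D s ∈ S) (h2 : ∀ s ∈ S, D' s ∈ S) (x : E) :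
    D ((Submodule.span ℂ S).topologicalClosure.starProjection x) =
      (Submodule.span ℂ S).topologicalClosure.starProjection (D x) := by
  refine (Submodule.eq_starProjection_of_mem_of_inner_eq_zero ?_ ?_).symm
  · exact map_mem_clspan S D h1 (Submodule.starProjection_apply_mem _ _)
  · intro w hw
    rw [← map_sub, hD]
    exact Submodule.starProjection_inner_eq_zero _ _ (map_mem_clspan S D' h2 hw)

variable {H : Type*} [NormedAddCommGroup H] [InnerProductSpace ℂ H] [CompleteSpace H]

theorem conj_form {M : Set (H →L[ℂ] H)} (hadd : ∀ a ∈ M, ∀ b ∈ M, a + b ∈ M)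
    (hsmul : ∀ (c : ℂ), ∀ a ∈ M, c • a ∈ M) (hstar : ∀ a ∈ M, star a ∈ M) (ω z : H)
    (h1 : ∀ a ∈ M, star a = a → (⟪a ω, z⟫_ℂ).re = 0) (a : H →L[ℂ] H) (ha : a ∈ M) :
    ⟪a ω, z⟫_ℂ = - ⟪a z, ω⟫_ℂ := by
  have e1 := h1 (a + star a) (hadd _ ha _ (hstar _ ha)) (by rw [star_add, star_star, add_comm])
  have e2 := h1 (Complex.I • a + (-Complex.I) • star a)
    (hadd _ (hsmul _ _ ha) _ (hsmul _ _ (hstar _ ha)))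
    (by rw [star_add, star_smul, star_smul, star_star, add_comm]; simp)
  have e3 : ⟪a z, ω⟫_ℂ = (starRingEnd ℂ) ⟪star a ω, z⟫_ℂ := by
    rw [inner_conj_symm, ContinuousLinearMap.star_eq_adjoint,
      ContinuousLinearMap.adjoint_inner_right]
  rw [e3]
  generalize hu : ⟪star a ω, z⟫_ℂ = u at *
  simp only [add_apply, smul_apply, hu, inner_add_left,
    inner_smul_left, map_neg, Complex.conj_I, neg_neg] at e1 e2
  apply Complex.ext
  · simp at e1 ⊢
    linarith
  · simp at e2 ⊢
    linarith

theorem lem_i {M : Set (H →L[ℂ] H)} (hM : Set.centralizer (Set.centralizer M) = M)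
    (hstar : ∀ a ∈ M, star a ∈ M) (ω z : H) (hz : z ∈ closure {x | ∃ a ∈ M, x = a ω})
    (h1 : ∀ a ∈ M, star a = a → (⟪a ω, z⟫_ℂ).re = 0)
    (h2 : ∀ b ∈ Set.centralizer M, star b = b → (⟪b ω, z⟫_ℂ).im = 0) : z = 0 := by
  have hadd : ∀ a ∈ M, ∀ b ∈ M, a + b ∈ M := by
    rw [← hM]; intro a ha b hb; exact Set.add_mem_centralizer ha hb
  have hsmul : ∀ (c : ℂ), ∀ a ∈ M, c • a ∈ M := by
    rw [← hM]; intro c a ha; exact Set.smul_mem_centralizer c ha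
  have hmul : ∀ a ∈ M, ∀ b ∈ M, a * b ∈ M := by
    rw [← hM]; intro a ha b hb; exact Set.mul_mem_centralizer ha hb
  have hstar' : ∀ b ∈ Set.centralizer M, star b ∈ Set.centralizer M := fun b hb =>
    Set.star_mem_centralizer' hstar hb
  have k1 := conj_form hadd hsmul hstar ω z h1
  have k2 := conj_form (M := Set.centralizer M) (fun a ha b hb => Set.add_mem_centralizer ha hb)
    (fun c a ha => Set.smul_mem_centralizer c ha) hstar' ω (Complex.I • z)
    (by
      intro b hb hbs
      have := h2 b hb hbs
      rw [inner_smul_right]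
      simp [this])
  have k2' : ∀ b ∈ Set.centralizer M, ⟪b ω, z⟫_ℂ = ⟪b z, ω⟫_ℂ := by
    intro b hb
    have := k2 b hb
    rw [map_smul, inner_smul_right, inner_smul_left] at this
    simp at this
    exact this
  -- the doubled space
  let ι₁ : H →L[ℂ] (WithLp 2 (H × H)) := (WithLp.prodContinuousLinearEquiv 2 ℂ H H).symm.toContinuousLinearMap ∘L
    ContinuousLinearMap.inl ℂ H H
  let ι₂ : H →L[ℂ] (WithLp 2 (H × H)) := (WithLp.prodContinuousLinearEquiv 2 ℂ H H).symm.toContinuousLinearMap ∘L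
    ContinuousLinearMap.inr ℂ H H
  let π₁ : (WithLp 2 (H × H)) →L[ℂ] H := WithLp.fstL 2 ℂ H H
  let π₂ : (WithLp 2 (H × H)) →L[ℂ] H := WithLp.sndL 2 ℂ H H
  have ip : ∀ u v : WithLp 2 (H × H), ⟪u, v⟫_ℂ = ⟪π₁ u, π₁ v⟫_ℂ + ⟪π₂ u, π₂ v⟫_ℂ := fun u v =>
    WithLp.prod_inner_apply u v
  have p11 : ∀ x, π₁ (ι₁ x) = x := fun x => rfl
  have p12 : ∀ x, π₁ (ι₂ x) = 0 := fun x => rfl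
  have p21 : ∀ x, π₂ (ι₁ x) = 0 := fun x => rfl
  have p22 : ∀ x, π₂ (ι₂ x) = x := fun x => rfl
  clear_value ι₁ ι₂ π₁ π₂
  let D : (H →L[ℂ] H) → ((WithLp 2 (H × H)) →L[ℂ] (WithLp 2 (H × H))) := fun b => ι₁ ∘L b ∘L π₁ + ι₂ ∘L b ∘L π₂
  have hD : ∀ b u, D b u = ι₁ (b (π₁ u)) + ι₂ (b (π₂ u)) := fun b u => rfl
  clear_value D
  let S : Set (WithLp 2 (H × H)) := {v | ∃ b ∈ Set.centralizer M, v = ι₁ (b ω) + ι₂ (b z)}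
  let F := (Submodule.span ℂ S).topologicalClosure
  let e : (WithLp 2 (H × H)) →L[ℂ] (WithLp 2 (H × H)) := F.starProjection
  have hinv : ∀ b ∈ Set.centralizer M, ∀ s ∈ S, D b s ∈ S := by
    rintro b hb s ⟨c, hc, rfl⟩
    refine ⟨b * c, Set.mul_mem_centralizer hb hc, ?_⟩
    simp [hD, p11, p12, p21, p22]
  have hcomm : ∀ b ∈ Set.centralizer M, ∀ u, D b (e u) = e (D b u) := by
    intro b hb u
    refine comm_proj S (D b) (D (star b)) ?_ (hinv b hb) (hinv _ (hstar' b hb)) u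
    intro x y
    simp [ip, hD, p11, p12, p21, p22, ContinuousLinearMap.star_eq_adjoint,
      ContinuousLinearMap.adjoint_inner_right]
  have hv : e (ι₁ ω + ι₂ z) = ι₁ ω + ι₂ z := by
    refine Submodule.starProjection_eq_self_iff.2 ?_
    refine Submodule.le_topologicalClosure _ (Submodule.subset_span ?_)
    exact ⟨1, Set.one_mem_centralizer, by simp⟩
  have hw : e (ι₁ z - ι₂ ω) = 0 := by
    refine (Submodule.starProjection_apply_eq_zero_iff _).2 ?_
    rw [Submodule.orthogonal_closure, Submodule.mem_orthogonal]
    intro u hu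
    induction hu using Submodule.span_induction with
    | mem x h =>
      obtain ⟨b, hb, rfl⟩ := h
      simp [ip, p11, p12, p21, p22, k2' b hb]
    | zero => simp
    | add x y _ _ h1 h2 => rw [inner_add_left, h1, h2, add_zero]
    | smul c x _ h1 => rw [inner_smul_left, h1, mul_zero]
  let p : H →L[ℂ] H := π₁ ∘L e ∘L ι₁
  let q : H →L[ℂ] H := π₁ ∘L e ∘L ι₂
  have hp : ∀ x, p x = π₁ (e (ι₁ x)) := fun x => rfl
  have hq : ∀ x, q x = π₁ (e (ι₂ x)) := fun x => rfl
  have hpM : p ∈ M := by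
    rw [← hM]
    intro b hb
    ext x
    have := congrArg π₁ (hcomm b hb (ι₁ x))
    simpa [hD, p11, p12, p21, p22, hp] using this
  have hqM : q ∈ M := by
    rw [← hM]
    intro b hb
    ext x
    have := congrArg π₁ (hcomm b hb (ι₂ x))
    simpa [hD, p11, p12, p21, p22, hq] using this
  have e1 : p ω + q z = ω := by
    have := congrArg π₁ hv
    simpa [hp, hq, p11, p12] using this
  have e2 : p z = q ω := by
    have := congrArg π₁ hw
    simpa [hp, hq, sub_eq_zero] using this
  have npos : ∀ x, ⟪p x, x⟫_ℂ = ((‖e (ι₁ x)‖ ^ 2 : ℝ) : ℂ) := by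
    intro x
    have h3 : ⟪p x, x⟫_ℂ = ⟪e (ι₁ x), ι₁ x⟫_ℂ := by
      rw [ip, p11, p21, inner_zero_right, add_zero, hp]
    have h4 : e (ι₁ x) = e (e (ι₁ x)) :=
      (Submodule.starProjection_eq_self_iff.2 (Submodule.starProjection_apply_mem _ _)).symm
    rw [h3, h4]
    have h5 : ⟪e (e (ι₁ x)), ι₁ x⟫_ℂ = ⟪e (ι₁ x), e (ι₁ x)⟫_ℂ :=
      Submodule.inner_starProjection_left_eq_right _ _ _
    rw [h5, ← h4, inner_self_eq_norm_sq_to_K]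
    push_cast
    rfl
  have nι : ∀ x, ‖ι₁ x‖ = ‖x‖ := by
    intro x
    have h3 : ⟪ι₁ x, ι₁ x⟫_ℂ = ⟪x, x⟫_ℂ := by
      rw [ip, p11, p21, inner_zero_right, add_zero]
    rw [inner_self_eq_norm_sq_to_K, inner_self_eq_norm_sq_to_K] at h3
    have h4 : ‖ι₁ x‖ ^ 2 = ‖x‖ ^ 2 := by exact_mod_cast h3
    exact (sq_eq_sq₀ (norm_nonneg _) (norm_nonneg _)).1 h4
  have key : ‖e (ι₁ z)‖ ^ 2 + ‖ω‖ ^ 2 = ‖e (ι₁ ω)‖ ^ 2 := by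
    have h3 : ⟪p z, z⟫_ℂ = - (⟪ω, ω⟫_ℂ - ⟪p ω, ω⟫_ℂ) := by
      rw [e2, k1 q hqM, ← inner_sub_left]
      congr 2
      rw [eq_sub_iff_add_eq, add_comm]
      exact e1
    rw [npos, npos, inner_self_eq_norm_sq_to_K] at h3
    have h4 : ((‖e (ι₁ z)‖ ^ 2 + ‖ω‖ ^ 2 : ℝ) : ℂ) = ((‖e (ι₁ ω)‖ ^ 2 : ℝ) : ℂ) := by
      push_cast at h3 ⊢
      rw [h3]
      simp
    exact_mod_cast h4
  have hle : ‖e (ι₁ ω)‖ ≤ ‖ω‖ := by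
    rw [← nι]
    exact Submodule.norm_starProjection_apply_le _ _
  have hle2 : ‖e (ι₁ ω)‖ ^ 2 ≤ ‖ω‖ ^ 2 := pow_le_pow_left₀ (norm_nonneg _) hle 2
  have hez : e (ι₁ z) = 0 := by
    have : ‖e (ι₁ z)‖ ^ 2 = 0 := le_antisymm (by linarith) (sq_nonneg _)
    simpa using this
  have heω : e (ι₁ ω) = ι₁ ω := by
    refine Submodule.starProjection_eq_self_iff.2 ((Submodule.mem_iff_norm_starProjection _ _).2 ?_)
    rw [nι]
    rw [hez] at key
    have : ‖e (ι₁ ω)‖ ^ 2 = ‖ω‖ ^ 2 := by simpa using key.symm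
    exact (sq_eq_sq₀ (norm_nonneg _) (norm_nonneg _)).1 this
  have hpz : p z = 0 := by rw [hp, hez, map_zero]
  have hpω : p ω = ω := by rw [hp, heω, p11]
  have hfin : ∀ a ∈ M, ⟪a ω, z⟫_ℂ = 0 := by
    intro a ha
    have := k1 (a * p) (hmul a ha p hpM)
    simpa [hpz, hpω] using this
  have hcl : IsClosed {x : H | ⟪x, z⟫_ℂ = 0} := isClosed_eq (by fun_prop) continuous_const
  have : z ∈ {x : H | ⟪x, z⟫_ℂ = 0} := by
    refine closure_minimal ?_ hcl hz
    rintro x ⟨a, ha, rfl⟩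
    exact hfin a ha
  exact inner_self_eq_zero.1 this

end lemI

section oneVar

variable {H : Type*} [NormedAddCommGroup H] [InnerProductSpace ℂ H]

theorem re_inner_I_left (u v : H) :
    (⟪Complex.I • u, v⟫_ℂ).re = - (⟪u, Complex.I • v⟫_ℂ).re := by
  rw [inner_smul_left, inner_smul_right]; simp

theorem im_inner_eq (u v : H) : (⟪u, v⟫_ℂ).im = - (⟪u, Complex.I • v⟫_ℂ).re := by
  rw [inner_smul_right]; simp

theorem re_inner_I_right (u v : H) : (⟪u, Complex.I • v⟫_ℂ).re = - (⟪u, v⟫_ℂ).im := by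
  rw [inner_smul_right]; simp

theorem im_inner_I_right (u v : H) : (⟪u, Complex.I • v⟫_ℂ).im = (⟪u, v⟫_ℂ).re := by
  rw [inner_smul_right]; simp

theorem I_smul_I (x : H) : Complex.I • Complex.I • x = -x := by
  rw [smul_smul, Complex.I_mul_I, neg_one_smul]

/-- Real orthogonal projections, in terms of the complex inner product. -/
theorem exists_realProj [CompleteSpace H] (S : Submodule ℝ H) :
    ∃ P : H →ₗ[ℝ] H, (∀ x, P x ∈ closure (S : Set H)) ∧
      (∀ x, ∀ a ∈ S, (⟪a, x - P x⟫_ℂ).re = 0) ∧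
      (∀ x y, (⟪P x, y⟫_ℂ).re = (⟪x, P y⟫_ℂ).re) ∧
      (∀ x, (⟪P x, x⟫_ℂ).re = ‖P x‖ ^ 2) ∧
      (∀ x, ‖x - (2 : ℝ) • P x‖ = ‖x‖) ∧ (∀ a ∈ S, P a = a) := by
  letI : InnerProductSpace ℝ H := InnerProductSpace.complexToReal
  have hr : ∀ x y : H, (⟪x, y⟫_ℂ).re = ⟪x, y⟫_ℝ := fun x y => rfl
  let F := S.topologicalClosure
  have hF : ∀ a ∈ S, a ∈ F := fun a ha => S.le_topologicalClosure ha
  refine ⟨F.starProjection.toLinearMap, ?_, ?_, ?_, ?_, ?_, ?_⟩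
  · intro x
    exact Submodule.starProjection_apply_mem F x
  · intro x a ha
    rw [hr, real_inner_comm]
    exact Submodule.starProjection_inner_eq_zero x a (hF a ha)
  · intro x y
    rw [hr, hr]
    exact Submodule.inner_starProjection_left_eq_right F x y
  · intro x
    rw [hr]
    have h4 : F.starProjection x = F.starProjection (F.starProjection x) :=
      (Submodule.starProjection_eq_self_iff.2 (Submodule.starProjection_apply_mem _ _)).symm
    change ⟪F.starProjection x, x⟫_ℝ = ‖F.starProjection x‖ ^ 2
    rw [← real_inner_self_eq_norm_sq, ← Submodule.inner_starProjection_left_eq_right, ← h4]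
  · intro x
    have := (F.reflection).norm_map x
    rw [Submodule.reflection_apply, norm_sub_rev] at this
    rw [← this]
    congr 2
    exact two_smul ℝ _ |>.trans (two_smul ℕ _).symm
  · intro a ha
    exact Submodule.starProjection_eq_self_iff.2 (hF a ha)

theorem oneVar [CompleteSpace H] (SA SB : Submodule ℝ H)
    (hAB : ∀ a ∈ SA, ∀ b ∈ SB, (⟪a, b⟫_ℂ).im = 0)
    (hd : ∀ z : H, (∀ a ∈ SA, (⟪a, z⟫_ℂ).re = 0) → (∀ b ∈ SB, (⟪b, z⟫_ℂ).im = 0) → z = 0)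
    (hc : ∀ z : H, (∀ a ∈ SA, ⟪a, z⟫_ℂ = 0) → z = 0) :
    ∃ (P : H →ₗ[ℝ] H) (A : H →L[ℂ] H),
      (∀ x, P x ∈ closure (SA : Set H)) ∧
      (∀ x, ∃ b ∈ closure (SB : Set H), x - P x = Complex.I • b) ∧
      (∀ x, A x = x - P x + Complex.I • P (Complex.I • x)) ∧
      (∀ x y, ⟪A x, y⟫_ℂ = ⟪x, A y⟫_ℂ) ∧ ‖A‖ ≤ 1 ∧ ∀ x, A x = x → x = 0 := by
  obtain ⟨P, hP1, hP2, hP3, hP4, hP5, hP6⟩ := exists_realProj SA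
  obtain ⟨Q, hQ1, hQ2, hQ3, hQ4, hQ5, hQ6⟩ := exists_realProj SB
  have hAB' : ∀ a ∈ SA, ∀ b ∈ closure (SB : Set H), (⟪a, b⟫_ℂ).im = 0 := by
    intro a ha b hb
    have hcl : IsClosed {x : H | (⟪a, x⟫_ℂ).im = 0} :=
      isClosed_eq (Complex.continuous_im.comp (by fun_prop)) continuous_const
    exact closure_minimal (fun x hx => hAB a ha x hx) hcl hb
  let A₀ : H →ₗ[ℝ] H :=
    { toFun := fun x => x - P x + Complex.I • P (Complex.I • x)
      map_add' := by
        intro x y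
        simp only [smul_add, map_add]
        abel
      map_smul' := by
        intro c x
        have : Complex.I • c • x = c • Complex.I • x := smul_comm _ _ _
        simp only [this, map_smul, RingHom.id_apply, smul_add, smul_sub]
        rw [smul_comm Complex.I c] }
  have hA₀ : ∀ x, A₀ x = x - P x + Complex.I • P (Complex.I • x) := fun x => rfl
  have hA₀I : ∀ x, A₀ (Complex.I • x) = Complex.I • A₀ x := by
    intro x
    rw [hA₀, hA₀, I_smul_I, smul_add, I_smul_I, map_neg, smul_neg, smul_sub]
    abel
  have hA₀c : ∀ (c : ℂ) x, A₀ (c • x) = c • A₀ x := by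
    intro c x
    have hcx : ∀ y : H, c • y = c.re • y + c.im • Complex.I • y := by
      intro y
      conv_lhs => rw [← Complex.re_add_im c]
      rw [add_smul, mul_smul]
      simp
    rw [hcx, hcx, map_add, map_smul, map_smul, hA₀I]
  have hbd : ∀ x, ‖A₀ x‖ ≤ 1 * ‖x‖ := by
    intro x
    have e : (2 : ℝ) • A₀ x = (x - (2 : ℝ) • P x) +
        (-Complex.I) • (Complex.I • x - (2 : ℝ) • P (Complex.I • x)) := by
      rw [hA₀, smul_sub (-Complex.I), neg_smul, I_smul_I, neg_neg, neg_smul,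
        smul_comm Complex.I (2 : ℝ), smul_add, smul_sub, two_smul ℝ x]
      abel
    have h1 : ‖(2 : ℝ) • A₀ x‖ ≤ ‖x‖ + ‖x‖ := by
      rw [e]
      refine (norm_add_le _ _).trans ?_
      rw [hP5, norm_smul, hP5, norm_smul]
      simp
    rw [norm_smul] at h1
    simp at h1
    linarith
  let A : H →L[ℂ] H := LinearMap.mkContinuous
    { toFun := A₀, map_add' := map_add A₀, map_smul' := hA₀c } 1 hbd
  have hA : ∀ x, A x = x - P x + Complex.I • P (Complex.I • x) := fun x => rfl
  refine ⟨P, A, hP1, ?_, hA, ?_, ?_, ?_⟩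
  · intro x
    set u : H := -(Complex.I • (x - P x)) with hu
    refine ⟨Q u, hQ1 u, ?_⟩
    have hIu : Complex.I • u = x - P x := by rw [hu, smul_neg, I_smul_I, neg_neg]
    have : Complex.I • (u - Q u) = 0 := by
      apply hd
      · intro a ha
        rw [smul_sub, inner_sub_right, Complex.sub_re, hIu, hP2 x a ha, re_inner_I_right,
          hAB' a ha _ (hQ1 u)]
        simp
      · intro b hb
        rw [im_inner_I_right]
        exact hQ2 u b hb
    rw [smul_sub, sub_eq_zero] at this
    rw [← this, hIu]
  · have hre : ∀ x y, (⟪A x, y⟫_ℂ).re = (⟪x, A y⟫_ℂ).re := by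
      intro x y
      rw [hA, hA]
      simp only [inner_add_left, inner_add_right, inner_sub_left, inner_sub_right,
        Complex.add_re, Complex.sub_re]
      rw [hP3, re_inner_I_left, hP3, re_inner_I_left, neg_neg]
    intro x y
    apply Complex.ext (hre x y)
    rw [im_inner_eq, im_inner_eq, hre, map_smul]
  · exact LinearMap.mkContinuous_norm_le _ zero_le_one _
  · intro x hx
    rw [hA] at hx
    have h1 : P x = Complex.I • P (Complex.I • x) := by
      have h2 : x - P x + Complex.I • P (Complex.I • x) - x = 0 := by rw [hx, sub_self]
      rw [← sub_eq_zero, ← neg_eq_zero, ← h2]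
      abel
    have h2 := congrArg (fun v => (⟪v, x⟫_ℂ).re) h1
    simp only [re_inner_I_left, hP4] at h2
    have h3 : ‖P x‖ ^ 2 = 0 := le_antisymm (by rw [h2]; simp) (sq_nonneg _)
    have h4 : ‖P (Complex.I • x)‖ ^ 2 = 0 := by linarith
    have h5 : P x = 0 := by simpa using h3
    have h6 : P (Complex.I • x) = 0 := by simpa using h4
    apply hc
    intro a ha
    apply Complex.ext
    · rw [← hP6 a ha, hP3, h5]; simp
    · rw [im_inner_eq, ← hP6 a ha, hP3, h6]; simp

end oneVar

section twoVar

theorem contraction_sq {H : Type*} [NormedAddCommGroup H] [InnerProductSpace ℂ H]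
    (B : H →L[ℂ] H) (hB : ∀ x y, ⟪B x, y⟫_ℂ = ⟪x, B y⟫_ℂ) (hn : ‖B‖ ≤ 1) (z : H)
    (hz : ‖z‖ ≤ ‖B z‖) : B (B z) = z := by
  have hle : ∀ x, ‖B x‖ ≤ ‖x‖ := fun x => by
    simpa using B.le_of_opNorm_le hn x
  have h1 : ‖B z‖ = ‖z‖ := le_antisymm (hle z) hz
  have h2 : ‖B (B z) - z‖ ^ 2 = ‖B (B z)‖ ^ 2 - 2 * (⟪B (B z), z⟫_ℂ).re + ‖z‖ ^ 2 :=
    norm_sub_sq (𝕜 := ℂ) _ _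
  have h3 : (⟪B (B z), z⟫_ℂ).re = ‖z‖ ^ 2 := by
    rw [hB, ← h1]
    exact inner_self_eq_norm_sq (𝕜 := ℂ) _
  have h4 : ‖B (B z)‖ ^ 2 ≤ ‖z‖ ^ 2 :=
    pow_le_pow_left₀ (norm_nonneg _) ((hle _).trans (hle _)) 2
  have h5 : ‖B (B z) - z‖ ^ 2 = 0 := le_antisymm (by rw [h2, h3]; linarith) (sq_nonneg _)
  have h6 : B (B z) - z = 0 := by simpa using h5
  exact sub_eq_zero.1 h6

theorem slice_neg {H G : Type*} [NormedAddCommGroup H] [InnerProductSpace ℂ H] [CompleteSpace H]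
    [NormedAddCommGroup G] [InnerProductSpace ℂ G] [CompleteSpace G]
    (A : H →L[ℂ] H) (hA : ∀ x y, ⟪A x, y⟫_ℂ = ⟪x, A y⟫_ℂ) (hinj : ∀ x, A x = x → x = 0)
    (φ : H →L[ℂ] G) (z : G) (h : ∀ x, ⟪z, φ (A (A x))⟫_ℂ = ⟪z, φ x⟫_ℂ) (x : H) :
    ⟪z, φ (A x)⟫_ℂ = - ⟪z, φ x⟫_ℂ := by
  let w : H := ContinuousLinearMap.adjoint φ z
  have hw : ∀ x, ⟪z, φ x⟫_ℂ = ⟪w, x⟫_ℂ := fun x =>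
    (ContinuousLinearMap.adjoint_inner_left φ x z).symm
  have h1 : A (A w) = w := by
    refine ext_inner_right ℂ fun v => ?_
    rw [hA, hA, ← hw, ← hw, h]
  have h2 : A w + w = 0 := by
    apply hinj
    rw [map_add, h1, add_comm]
  rw [hw, hw, ← hA, eq_neg_of_add_eq_zero_left h2, inner_neg_left]

variable {H K HK : Type*}
    [NormedAddCommGroup H] [InnerProductSpace ℂ H] [CompleteSpace H]
    [NormedAddCommGroup K] [InnerProductSpace ℂ K] [CompleteSpace K]
    [NormedAddCommGroup HK] [InnerProductSpace ℂ HK] [CompleteSpace HK]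
    {tp : H →ₗ[ℂ] K →ₗ[ℂ] HK}

theorem twoVar (h : IsTP tp) (SA SB : Submodule ℝ H) (SC SD : Submodule ℝ K)
    (hAB : ∀ a ∈ SA, ∀ b ∈ SB, (⟪a, b⟫_ℂ).im = 0)
    (hd : ∀ z : H, (∀ a ∈ SA, (⟪a, z⟫_ℂ).re = 0) → (∀ b ∈ SB, (⟪b, z⟫_ℂ).im = 0) → z = 0)
    (hc : ∀ z : H, (∀ a ∈ SA, ⟪a, z⟫_ℂ = 0) → z = 0)
    (hAB' : ∀ a ∈ SC, ∀ b ∈ SD, (⟪a, b⟫_ℂ).im = 0)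
    (hd' : ∀ z : K, (∀ a ∈ SC, (⟪a, z⟫_ℂ).re = 0) → (∀ b ∈ SD, (⟪b, z⟫_ℂ).im = 0) → z = 0)
    (hc' : ∀ z : K, (∀ a ∈ SC, ⟪a, z⟫_ℂ = 0) → z = 0)
    (z : HK) (h1 : ∀ a ∈ SA, ∀ c ∈ SC, (⟪z, tp a c⟫_ℂ).im = 0)
    (h2 : ∀ b ∈ SB, ∀ d ∈ SD, (⟪z, tp b d⟫_ℂ).re = 0) : z = 0 := by
  obtain ⟨P, A, hP1, hP2, hA1, hA2, hA3, hA4⟩ := oneVar SA SB hAB hd hc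
  obtain ⟨Q, B, hQ1, hQ2, hB1, hB2, hB3, hB4⟩ := oneVar SC SD hAB' hd' hc'
  let f : H →L[ℂ] K →L[ℂ] HK := tp.mkContinuous₂ 1 (fun x y => by rw [h.norm, one_mul])
  have hf : ∀ x y, f x y = tp x y := fun x y => rfl
  have hcont : Continuous (Function.uncurry fun x y => ⟪z, tp x y⟫_ℂ) := by
    have : (Function.uncurry fun x y => ⟪z, tp x y⟫_ℂ) = fun p : H × K => ⟪z, f p.1 p.2⟫_ℂ := rfl
    rw [this]
    fun_prop
  have h1' : ∀ a ∈ closure (SA : Set H), ∀ c ∈ closure (SC : Set K),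
      (⟪z, tp a c⟫_ℂ).im = 0 := by
    intro a ha c hc
    have := map_mem_closure₂ (f := fun x y => (⟪z, tp x y⟫_ℂ).im) (u := {0})
      (Complex.continuous_im.comp hcont) ha hc (fun a ha c hc => h1 a ha c hc)
    simpa using this
  have h2' : ∀ a ∈ closure (SB : Set H), ∀ c ∈ closure (SD : Set K),
      (⟪z, tp a c⟫_ℂ).re = 0 := by
    intro a ha c hc
    have := map_mem_closure₂ (f := fun x y => (⟪z, tp x y⟫_ℂ).re) (u := {0})
      (Complex.continuous_re.comp hcont) ha hc (fun a ha c hc => h2 a ha c hc)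
    simpa using this
  let s : H → K → ℝ := fun x y => (⟪z, tp x y⟫_ℂ).im
  have s_def : ∀ x y, s x y = (⟪z, tp x y⟫_ℂ).im := fun x y => rfl
  have s_add_left : ∀ x x' y, s (x + x') y = s x y + s x' y := by
    intro x x' y; simp [s, inner_add_right]
  have s_add_right : ∀ x y y', s x (y + y') = s x y + s x y' := by
    intro x x' y; simp [s, inner_add_right]
  have s_sub_left : ∀ x x' y, s (x - x') y = s x y - s x' y := by
    intro x x' y; simp [s, inner_sub_right]
  have s_sub_right : ∀ x y y', s x (y - y') = s x y - s x y' := by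
    intro x x' y; simp [s, inner_sub_right]
  have s_I_left : ∀ x y, s (Complex.I • x) y = (⟪z, tp x y⟫_ℂ).re := by
    intro x y; simp [s, inner_smul_right]
  have s_I_right : ∀ x y, s x (Complex.I • y) = (⟪z, tp x y⟫_ℂ).re := by
    intro x y; simp [s, inner_smul_right]
  have s_I_I : ∀ x y, s (Complex.I • x) (Complex.I • y) = - s x y := by
    intro x y; simp [s, inner_smul_right]
  have s_neg_left : ∀ x y, s (-x) y = - s x y := by
    intro x y; simp [s]
  have s_neg_right : ∀ x y, s x (-y) = - s x y := by
    intro x y; simp [s]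
  clear_value s
  have k1 : ∀ x y, s (P x) (Q y) = 0 := fun x y => by rw [s_def]; exact h1' _ (hP1 x) _ (hQ1 y)
  have k2 : ∀ x y, s (Complex.I • (x - P x)) (y - Q y) = 0 := by
    intro x y
    obtain ⟨b, hb, hb'⟩ := hP2 x
    obtain ⟨d, hd, hd'⟩ := hQ2 y
    rw [hb', hd', s_I_I, s_I_left, h2' b hb d hd, neg_zero]
  have k2l : ∀ x y, s (x + Complex.I • P (Complex.I • x)) (y - Q y) = 0 := by
    intro x y
    have := k2 (Complex.I • x) y
    have e : Complex.I • (Complex.I • x - P (Complex.I • x)) =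
      -(x + Complex.I • P (Complex.I • x)) := by rw [smul_sub, I_smul_I]; abel
    rw [e, s_neg_left] at this
    linarith
  have k2r : ∀ x y, s (x - P x) (y + Complex.I • Q (Complex.I • y)) = 0 := by
    intro x y
    have := k2 x (Complex.I • y)
    have e : Complex.I • (Complex.I • y - Q (Complex.I • y)) =
      -(y + Complex.I • Q (Complex.I • y)) := by rw [smul_sub, I_smul_I]; abel
    rw [s_I_left, ← s_I_right, e, s_neg_right] at this
    linarith
  have k3 : ∀ x y, s (A x) (B y) = - s x y := by
    intro x y
    have a1 := k1 x y
    have a2 := k1 (Complex.I • x) (Complex.I • y)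
    have a3 := k2l x y
    have a4 := k2r x y
    rw [← neg_eq_zero, ← s_I_I] at a2
    rw [hA1, hB1]
    simp only [s_add_left, s_add_right, s_sub_left, s_sub_right] at a3 a4 ⊢
    linarith
  have k4 : ∀ x y, ⟪z, tp (A x) (B y)⟫_ℂ = - ⟪z, tp x y⟫_ℂ := by
    intro x y
    apply Complex.ext
    · rw [← s_I_left, ← map_smul, k3, s_I_left]; simp
    · rw [← s_def, k3, s_def]; simp
  -- the operators on the tensor product
  have sa : ∀ (T : H →L[ℂ] H) (S : K →L[ℂ] K), (∀ x y, ⟪T x, y⟫_ℂ = ⟪x, T y⟫_ℂ) →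
      (∀ x y, ⟪S x, y⟫_ℂ = ⟪x, S y⟫_ℂ) →
      ∀ u v, ⟪tens tp T S u, v⟫_ℂ = ⟪u, tens tp T S v⟫_ℂ := by
    intro T S hT hS u v
    have hT' : star T = T := by
      rw [ContinuousLinearMap.star_eq_adjoint]
      exact ((ContinuousLinearMap.eq_adjoint_iff T T).2 hT).symm
    have hS' : star S = S := by
      rw [ContinuousLinearMap.star_eq_adjoint]
      exact ((ContinuousLinearMap.eq_adjoint_iff S S).2 hS).symm
    have := h.tens_star T S
    rw [hT', hS', ContinuousLinearMap.star_eq_adjoint] at this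
    rw [← ContinuousLinearMap.adjoint_inner_right, this]
  have nz : ∀ (T : H →L[ℂ] H) (S : K →L[ℂ] K), ‖T‖ ≤ 1 → ‖S‖ ≤ 1 → ‖tens tp T S‖ ≤ 1 := by
    intro T S hT hS
    exact (h.tens_norm T S).trans (mul_le_one₀ hT (norm_nonneg _) hS)
  have one1 : ‖(1 : H →L[ℂ] H)‖ ≤ 1 := ContinuousLinearMap.norm_id_le
  have one2 : ‖(1 : K →L[ℂ] K)‖ ≤ 1 := ContinuousLinearMap.norm_id_le
  have hABz : tens tp A B z = -z := by
    rw [eq_neg_iff_add_eq_zero]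
    refine h.eq_zero fun x y => ?_
    rw [inner_add_right, ← sa A B hA2 hB2, h.tens_apply, ← inner_conj_symm, k4, map_neg,
      inner_conj_symm, neg_add_cancel]
  have hle : ∀ (T : HK →L[ℂ] HK), ‖T‖ ≤ 1 → ∀ x, ‖T x‖ ≤ ‖x‖ := fun T hn x => by
    simpa using T.le_of_opNorm_le hn x
  have hB2z : tens tp 1 B (tens tp 1 B z) = z := by
    apply contraction_sq _ (sa _ _ (fun _ _ => rfl) hB2) (nz _ _ one1 hB3)
    have e : tens tp A 1 (tens tp 1 B z) = -z := by
      rw [← hABz, ← ContinuousLinearMap.mul_apply, h.tens_mul, mul_one, one_mul]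
    rw [← norm_neg, ← e]
    exact hle _ (nz _ _ hA3 one2) _
  have hA2z : tens tp A 1 (tens tp A 1 z) = z := by
    apply contraction_sq _ (sa _ _ hA2 (fun _ _ => rfl)) (nz _ _ hA3 one2)
    have e : tens tp 1 B (tens tp A 1 z) = -z := by
      rw [← hABz, ← ContinuousLinearMap.mul_apply, h.tens_mul, mul_one, one_mul]
    rw [← norm_neg, ← e]
    exact hle _ (nz _ _ one1 hB3) _
  have kA : ∀ x y, ⟪z, tp (A x) y⟫_ℂ = - ⟪z, tp x y⟫_ℂ := by
    intro x y
    refine slice_neg A hA2 hA4 (f.flip y) z ?_ x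
    intro x
    change ⟪z, tp (A (A x)) y⟫_ℂ = ⟪z, tp x y⟫_ℂ
    conv_rhs => rw [← hA2z, sa _ _ hA2 (fun _ _ => rfl), sa _ _ hA2 (fun _ _ => rfl),
      h.tens_apply, h.tens_apply]
    rfl
  have kB : ∀ x y, ⟪z, tp x (B y)⟫_ℂ = - ⟪z, tp x y⟫_ℂ := by
    intro x y
    refine slice_neg B hB2 hB4 (f x) z ?_ y
    intro y
    change ⟪z, tp x (B (B y))⟫_ℂ = ⟪z, tp x y⟫_ℂ
    conv_rhs => rw [← hB2z, sa _ _ (fun _ _ => rfl) hB2, sa _ _ (fun _ _ => rfl) hB2,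
      h.tens_apply, h.tens_apply]
    rfl
  refine h.eq_zero fun x y => ?_
  have e := k4 x y
  rw [kA, kB, neg_neg] at e
  have e2 : ⟪z, tp x y⟫_ℂ = 0 := self_eq_neg.1 e
  rw [← inner_conj_symm, e2, map_zero]

end twoVar

section core

theorem localData {H : Type*} [NormedAddCommGroup H] [InnerProductSpace ℂ H] [CompleteSpace H]
    {M : Set (H →L[ℂ] H)} (hM : Set.centralizer (Set.centralizer M) = M)
    (hstar : ∀ a ∈ M, star a ∈ M) (ω : H) :
    ∃ (F : Submodule ℂ H) (e : H →L[ℂ] H) (SA SB : Submodule ℝ H),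
      IsClosed (F : Set H) ∧ e ∈ Set.centralizer M ∧ star e = e ∧ (∀ x, e x ∈ F) ∧
      (∀ x ∈ F, e x = x) ∧ ω ∈ F ∧
      (∀ a ∈ SA, a ∈ F) ∧ (∀ b ∈ SB, b ∈ F) ∧
      (∀ a ∈ SA, ∃ T ∈ M, star T = T ∧ a = T ω) ∧
      (∀ b ∈ SB, ∃ T ∈ Set.centralizer M, star T = T ∧ b = T ω) ∧
      (∀ a ∈ SA, ∀ b ∈ SB, (⟪a, b⟫_ℂ).im = 0) ∧
      (∀ z ∈ F, (∀ a ∈ SA, (⟪a, z⟫_ℂ).re = 0) → (∀ b ∈ SB, (⟪b, z⟫_ℂ).im = 0) → z = 0) ∧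
      (∀ z ∈ F, (∀ a ∈ SA, ⟪a, z⟫_ℂ = 0) → z = 0) := by
  have hadd : ∀ a ∈ M, ∀ b ∈ M, a + b ∈ M := by
    rw [← hM]; intro a ha b hb; exact Set.add_mem_centralizer ha hb
  have hsmul : ∀ (c : ℂ), ∀ a ∈ M, c • a ∈ M := by
    rw [← hM]; intro c a ha; exact Set.smul_mem_centralizer c ha
  have hmul : ∀ a ∈ M, ∀ b ∈ M, a * b ∈ M := by
    rw [← hM]; intro a ha b hb; exact Set.mul_mem_centralizer ha hb
  have h0 : (0 : H →L[ℂ] H) ∈ M := by rw [← hM]; exact Set.zero_mem_centralizer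
  have h1 : (1 : H →L[ℂ] H) ∈ M := by rw [← hM]; exact Set.one_mem_centralizer
  let S : Set H := {x | ∃ a ∈ M, x = a ω}
  have hspan : ((Submodule.span ℂ S : Submodule ℂ H) : Set H) = S := by
    refine Set.Subset.antisymm ?_ Submodule.subset_span
    let S' : Submodule ℂ H :=
      { carrier := S
        add_mem' := by
          rintro _ _ ⟨a, ha, rfl⟩ ⟨b, hb, rfl⟩
          exact ⟨a + b, hadd a ha b hb, rfl⟩
        zero_mem' := ⟨0, h0, rfl⟩
        smul_mem' := by
          rintro c _ ⟨a, ha, rfl⟩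
          exact ⟨c • a, hsmul c a ha, rfl⟩ }
    exact (Submodule.span_le (p := S')).2 (fun x hx => hx)
  let F := (Submodule.span ℂ S).topologicalClosure
  let e : H →L[ℂ] H := F.starProjection
  have hFcl : (F : Set H) = closure S := by
    change closure ((Submodule.span ℂ S : Submodule ℂ H) : Set H) = _
    rw [hspan]
  have hSF : ∀ x ∈ S, x ∈ F := fun x hx =>
    Submodule.le_topologicalClosure _ (Submodule.subset_span hx)
  have heF : ∀ x ∈ F, e x = x := fun x hx => Submodule.starProjection_eq_self_iff.2 hx
  have hesym : ∀ x y, ⟪e x, y⟫_ℂ = ⟪x, e y⟫_ℂ := fun x y =>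
    Submodule.inner_starProjection_left_eq_right _ _ _
  have hestar : star e = e := by
    rw [ContinuousLinearMap.star_eq_adjoint]
    exact ((ContinuousLinearMap.eq_adjoint_iff _ _).2 hesym).symm
  have heM : e ∈ Set.centralizer M := by
    intro a ha
    ext x
    have hS : ∀ a ∈ M, ∀ s ∈ S, a s ∈ S := by
      rintro a ha _ ⟨b, hb, rfl⟩
      exact ⟨a * b, hmul a ha b hb, rfl⟩
    refine comm_proj S a (star a) ?_ (hS a ha) (hS _ (hstar a ha)) x
    intro x y
    rw [ContinuousLinearMap.star_eq_adjoint, ContinuousLinearMap.adjoint_inner_right]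
  have hωS : ω ∈ S := ⟨1, h1, rfl⟩
  let SA : Submodule ℝ H :=
    { carrier := {x | ∃ T ∈ M, star T = T ∧ x = T ω}
      add_mem' := by
        rintro _ _ ⟨a, ha, ha', rfl⟩ ⟨b, hb, hb', rfl⟩
        exact ⟨a + b, hadd a ha b hb, by rw [star_add, ha', hb'], rfl⟩
      zero_mem' := ⟨0, h0, star_zero _, rfl⟩
      smul_mem' := by
        rintro c _ ⟨a, ha, ha', rfl⟩
        refine ⟨(c : ℂ) • a, hsmul c a ha, by rw [star_smul, ha']; simp, ?_⟩
        simp }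
  let SB : Submodule ℝ H :=
    { carrier := {x | ∃ T ∈ Set.centralizer M, star T = T ∧ e * T = T ∧ x = T ω}
      add_mem' := by
        rintro _ _ ⟨a, ha, ha', ha'', rfl⟩ ⟨b, hb, hb', hb'', rfl⟩
        exact ⟨a + b, Set.add_mem_centralizer ha hb, by rw [star_add, ha', hb'],
          by rw [mul_add, ha'', hb''], rfl⟩
      zero_mem' := ⟨0, Set.zero_mem_centralizer, star_zero _, mul_zero _, rfl⟩
      smul_mem' := by
        rintro c _ ⟨a, ha, ha', ha'', rfl⟩
        refine ⟨(c : ℂ) • a, Set.smul_mem_centralizer _ ha, by rw [star_smul, ha']; simp,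
          by rw [mul_smul_comm, ha''], ?_⟩
        simp }
  have hee : e * e = e := by
    ext x
    exact heF _ (Submodule.starProjection_apply_mem _ _)
  refine ⟨F, e, SA, SB, Submodule.isClosed_topologicalClosure _, heM, hestar,
    fun x => Submodule.starProjection_apply_mem _ _, heF, hSF _ hωS, ?_, ?_, ?_, ?_, ?_, ?_, ?_⟩
  · rintro _ ⟨T, hT, _, rfl⟩
    exact hSF _ ⟨T, hT, rfl⟩
  · rintro _ ⟨T, hT, _, h3, rfl⟩
    rw [← h3]
    exact Submodule.starProjection_apply_mem _ _
  · rintro _ ⟨T, hT, h2, rfl⟩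
    exact ⟨T, hT, h2, rfl⟩
  · rintro _ ⟨T, hT, h2, _, rfl⟩
    exact ⟨T, hT, h2, rfl⟩
  · rintro _ ⟨T, hT, hT', rfl⟩ _ ⟨B, hB, hB', _, rfl⟩
    have e1 : ⟪T ω, B ω⟫_ℂ = ⟪B ω, T ω⟫_ℂ := by
      have i1 : ⟪T ω, B ω⟫_ℂ = ⟪ω, (T * B) ω⟫_ℂ := by
        nth_rw 1 [← hT']
        rw [ContinuousLinearMap.star_eq_adjoint, ContinuousLinearMap.adjoint_inner_left]
        rfl
      have i2 : ⟪B ω, T ω⟫_ℂ = ⟪ω, (B * T) ω⟫_ℂ := by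
        nth_rw 1 [← hB']
        rw [ContinuousLinearMap.star_eq_adjoint, ContinuousLinearMap.adjoint_inner_left]
        rfl
      rw [i1, i2, hB T hT]
    have e2 := inner_conj_symm (𝕜 := ℂ) (T ω) (B ω)
    rw [← e1] at e2
    exact Complex.conj_eq_iff_im.1 e2
  · intro z hz ha hb
    refine lem_i hM hstar ω z ?_ ?_ ?_
    · change z ∈ closure S
      rw [← hFcl]
      exact hz
    · intro a haM has
      exact ha _ ⟨a, haM, has, rfl⟩
    · intro b hbM hbs
      have := hb ((e * b * e) ω) ⟨e * b * e, ?_, ?_, ?_, rfl⟩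
      · have e1 : (e * b * e) ω = e (b ω) := by
          change e (b (e ω)) = _
          rw [heF ω (hSF _ hωS)]
        rw [e1, hesym, heF z hz] at this
        exact this
      · exact Set.mul_mem_centralizer (Set.mul_mem_centralizer heM hbM) heM
      · rw [star_mul, star_mul, hestar, hbs, mul_assoc]
      · rw [← mul_assoc, ← mul_assoc, hee]
  · intro z hz ha
    have hfin : ∀ a ∈ M, ⟪a ω, z⟫_ℂ = 0 := by
      intro a haM
      have i1 := ha ((a + star a) ω) ⟨a + star a, hadd _ haM _ (hstar _ haM),
        by rw [star_add, star_star, add_comm], rfl⟩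
      have i2 := ha ((Complex.I • a + (-Complex.I) • star a) ω)
        ⟨Complex.I • a + (-Complex.I) • star a,
          hadd _ (hsmul _ _ haM) _ (hsmul _ _ (hstar _ haM)),
          by rw [star_add, star_smul, star_smul, star_star, add_comm]; simp, rfl⟩
      simp only [add_apply, smul_apply, inner_add_left,
        inner_smul_left, map_neg, Complex.conj_I, neg_neg] at i1 i2
      generalize ⟪a ω, z⟫_ℂ = u at *
      generalize ⟪(star a) ω, z⟫_ℂ = v at *
      have h3 : Complex.I * (u - v) = 0 := by
        have : Complex.I * (u - v) = -(-Complex.I * u + Complex.I * v) := by ring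
        rw [this, i2, neg_zero]
      have h4 : u - v = 0 := by
        rcases mul_eq_zero.1 h3 with h | h
        · exact absurd h Complex.I_ne_zero
        · exact h
      have h5 : (2 : ℂ) * u = 0 := by linear_combination i1 + h4
      simpa using h5
    have hcl : IsClosed {x : H | ⟪x, z⟫_ℂ = 0} := isClosed_eq (by fun_prop) continuous_const
    have : z ∈ {x : H | ⟪x, z⟫_ℂ = 0} := by
      refine closure_minimal ?_ hcl (show z ∈ closure S by rw [← hFcl]; exact hz)
      rintro x ⟨a, ha, rfl⟩
      exact hfin a ha
    exact inner_self_eq_zero.1 this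

variable {H K HK : Type*}
    [NormedAddCommGroup H] [InnerProductSpace ℂ H] [CompleteSpace H]
    [NormedAddCommGroup K] [InnerProductSpace ℂ K] [CompleteSpace K]
    [NormedAddCommGroup HK] [InnerProductSpace ℂ HK] [CompleteSpace HK]
    {tp : H →ₗ[ℂ] K →ₗ[ℂ] HK}

/-- Version of `twoVar` on closed subspaces. -/
theorem twoVarSub (h : IsTP tp) (F : Submodule ℂ H) (hF : IsClosed (F : Set H))
    (F' : Submodule ℂ K) (hF' : IsClosed (F' : Set K))
    (SA SB : Submodule ℝ H) (SC SD : Submodule ℝ K)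
    (hSA : ∀ a ∈ SA, a ∈ F) (hSB : ∀ a ∈ SB, a ∈ F) (hSC : ∀ a ∈ SC, a ∈ F')
    (hSD : ∀ a ∈ SD, a ∈ F')
    (hAB : ∀ a ∈ SA, ∀ b ∈ SB, (⟪a, b⟫_ℂ).im = 0)
    (hd : ∀ z ∈ F, (∀ a ∈ SA, (⟪a, z⟫_ℂ).re = 0) → (∀ b ∈ SB, (⟪b, z⟫_ℂ).im = 0) → z = 0)
    (hc : ∀ z ∈ F, (∀ a ∈ SA, ⟪a, z⟫_ℂ = 0) → z = 0)
    (hAB' : ∀ a ∈ SC, ∀ b ∈ SD, (⟪a, b⟫_ℂ).im = 0)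
    (hd' : ∀ z ∈ F', (∀ a ∈ SC, (⟪a, z⟫_ℂ).re = 0) → (∀ b ∈ SD, (⟪b, z⟫_ℂ).im = 0) → z = 0)
    (hc' : ∀ z ∈ F', (∀ a ∈ SC, ⟪a, z⟫_ℂ = 0) → z = 0)
    (z : HK)
    (hz : z ∈ (Submodule.span ℂ {w : HK | ∃ x ∈ F, ∃ y ∈ F', w = tp x y}).topologicalClosure)
    (h1 : ∀ a ∈ SA, ∀ c ∈ SC, (⟪z, tp a c⟫_ℂ).im = 0)
    (h2 : ∀ b ∈ SB, ∀ d ∈ SD, (⟪z, tp b d⟫_ℂ).re = 0) : z = 0 := by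
  let G := (Submodule.span ℂ {w : HK | ∃ x ∈ F, ∃ y ∈ F', w = tp x y}).topologicalClosure
  have hG : ∀ x ∈ F, ∀ y ∈ F', tp x y ∈ G := fun x hx y hy =>
    Submodule.le_topologicalClosure _ (Submodule.subset_span ⟨x, hx, y, hy, rfl⟩)
  have : CompleteSpace F := hF.completeSpace_coe
  have : CompleteSpace F' := hF'.completeSpace_coe
  have : CompleteSpace G := (Submodule.isClosed_topologicalClosure _).completeSpace_coe
  let tp' : F →ₗ[ℂ] F' →ₗ[ℂ] G := LinearMap.mk₂ ℂ
    (fun x y => (⟨tp x y, hG _ x.2 _ y.2⟩ : G))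
    (by intro x x' y; ext; simp) (by intro c x y; ext; simp)
    (by intro x y y'; ext; simp) (by intro c x y; ext; simp)
  have htp' : ∀ x y, ((tp' x y : G) : HK) = tp x y := fun x y => rfl
  have hTP : IsTP tp' := by
    refine ⟨?_, ?_⟩
    · intro x x' y y'
      rw [Submodule.coe_inner, htp', htp', h.inner]
      rfl
    · rw [Submodule.dense_iff_topologicalClosure_eq_top, Submodule.topologicalClosure_eq_top_iff,
        Submodule.eq_bot_iff]
      intro w hw
      rw [Submodule.mem_orthogonal] at hw
      have hw1 : ∀ x ∈ F, ∀ y ∈ F', ⟪tp x y, (w : HK)⟫_ℂ = 0 := by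
        intro x hx y hy
        exact hw (tp' ⟨x, hx⟩ ⟨y, hy⟩) (Submodule.subset_span ⟨_, _, rfl⟩)
      have hw2 : ∀ u ∈ G, ⟪u, (w : HK)⟫_ℂ = 0 := by
        intro u hu
        have : (w : HK) ∈ (Submodule.span ℂ
            {w : HK | ∃ x ∈ F, ∃ y ∈ F', w = tp x y})ᗮ := by
          rw [Submodule.mem_orthogonal]
          intro u hu
          induction hu using Submodule.span_induction with
          | mem x h => obtain ⟨x, hx, y, hy, rfl⟩ := h; exact hw1 x hx y hy
          | zero => simp
          | add x y _ _ h1 h2 => rw [inner_add_left, h1, h2, add_zero]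
          | smul c x _ h1 => rw [inner_smul_left, h1, mul_zero]
        rw [← Submodule.orthogonal_closure] at this
        exact (Submodule.mem_orthogonal _ _).1 this u hu
      have := hw2 w w.2
      ext
      exact inner_self_eq_zero.1 this
  have key := twoVar hTP
    (SA.comap (F.subtype.restrictScalars ℝ)) (SB.comap (F.subtype.restrictScalars ℝ))
    (SC.comap (F'.subtype.restrictScalars ℝ)) (SD.comap (F'.subtype.restrictScalars ℝ))
    (fun a ha b hb => hAB a ha b hb)
    (fun z k1 k2 => Subtype.ext (hd z z.2 (fun a ha => k1 ⟨a, hSA a ha⟩ ha)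
      (fun b hb => k2 ⟨b, hSB b hb⟩ hb)))
    (fun z k1 => Subtype.ext (hc z z.2 (fun a ha => k1 ⟨a, hSA a ha⟩ ha)))
    (fun a ha b hb => hAB' a ha b hb)
    (fun z k1 k2 => Subtype.ext (hd' z z.2 (fun a ha => k1 ⟨a, hSC a ha⟩ ha)
      (fun b hb => k2 ⟨b, hSD b hb⟩ hb)))
    (fun z k1 => Subtype.ext (hc' z z.2 (fun a ha => k1 ⟨a, hSC a ha⟩ ha)))
    (⟨z, hz⟩ : G) (fun a ha c hc => h1 a ha c hc) (fun a ha c hc => h2 a ha c hc)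
  exact congrArg Subtype.val key

end core

section core2

variable {H K HK : Type*}
    [NormedAddCommGroup H] [InnerProductSpace ℂ H] [CompleteSpace H]
    [NormedAddCommGroup K] [InnerProductSpace ℂ K] [CompleteSpace K]
    [NormedAddCommGroup HK] [InnerProductSpace ℂ HK] [CompleteSpace HK]
    {tp : H →ₗ[ℂ] K →ₗ[ℂ] HK}

theorem sa_inner {E : Type*} [NormedAddCommGroup E] [InnerProductSpace ℂ E] [CompleteSpace E]
    {X : E →L[ℂ] E} (hX : star X = X) (x y : E) : ⟪X x, y⟫_ℂ = ⟪x, X y⟫_ℂ := by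
  nth_rw 1 [← hX]
  rw [ContinuousLinearMap.star_eq_adjoint, ContinuousLinearMap.adjoint_inner_left]

theorem core_diag (h : IsTP tp) {M : Set (H →L[ℂ] H)} {N : Set (K →L[ℂ] K)}
    (hM : Set.centralizer (Set.centralizer M) = M) (hMstar : ∀ T ∈ M, star T ∈ M)
    (hN : Set.centralizer (Set.centralizer N) = N) (hNstar : ∀ T ∈ N, star T ∈ N)
    (X Y : HK →L[ℂ] HK) (hXs : star X = X)
    (hX : ∀ T ∈ M, ∀ S ∈ N, X * tens tp T S = tens tp T S * X)
    (hY : ∀ T ∈ Set.centralizer M, ∀ S ∈ Set.centralizer N, Y * tens tp T S = tens tp T S * Y)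
    (ω₁ : H) (ω₂ : K) :
    ⟪(X * Y - Y * X) (tp ω₁ ω₂), tp ω₁ ω₂⟫_ℂ = 0 := by
  obtain ⟨F, e, SA, SB, hF, heM, hes, heF, heF', hωF, hSA, hSB, hSA', hSB', hAB, hd, hc⟩ :=
    localData hM hMstar ω₁
  obtain ⟨F', f, SC, SD, hF', hfN, hfs, hfF, hfF', hωF', hSC, hSD, hSC', hSD', hCD, hd', hc'⟩ :=
    localData hN hNstar ω₂
  set ω := tp ω₁ ω₂ with hω
  let G := (Submodule.span ℂ {w : HK | ∃ x ∈ F, ∃ y ∈ F', w = tp x y}).topologicalClosure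
  have hGcl : IsClosed (G : Set HK) := Submodule.isClosed_topologicalClosure _
  have hG : ∀ x ∈ F, ∀ y ∈ F', tp x y ∈ G := fun x hx y hy =>
    Submodule.le_topologicalClosure _ (Submodule.subset_span ⟨x, hx, y, hy, rfl⟩)
  let g := tens tp e f
  have hgs : star g = g := by rw [h.tens_star, hes, hfs]
  have hgG : ∀ w, g w ∈ G := by
    intro w
    have hcl : IsClosed {w | g w ∈ G} := hGcl.preimage g.continuous
    have hsub : ((Submodule.span ℂ {z : HK | ∃ x y, z = tp x y} : Submodule ℂ HK) : Set HK) ⊆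
        {w | g w ∈ G} := by
      have : Submodule.span ℂ {z : HK | ∃ x y, z = tp x y} ≤ G.comap g.toLinearMap := by
        rw [Submodule.span_le]
        rintro _ ⟨x, y, rfl⟩
        change g (tp x y) ∈ G
        rw [h.tens_apply]
        exact hG _ (heF x) _ (hfF y)
      exact this
    exact closure_minimal hsub hcl (h.dense w)
  have hgtp : ∀ x ∈ F, ∀ y ∈ F', g (tp x y) = tp x y := by
    intro x hx y hy
    rw [h.tens_apply, heF' x hx, hfF' y hy]
  have hgω : g ω = ω := hgtp _ hωF _ hωF'
  let L : Submodule ℝ HK := Submodule.span ℝ {w : HK | ∃ b ∈ SB, ∃ d ∈ SD, w = tp b d}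
  obtain ⟨P, hP1, hP2, -⟩ := exists_realProj L
  let ζ := g (X ω)
  have hLG : closure (L : Set HK) ⊆ G := by
    refine closure_minimal ?_ hGcl
    have : L ≤ G.restrictScalars ℝ := by
      rw [Submodule.span_le]
      rintro _ ⟨b, hb, d, hd, rfl⟩
      exact hG _ (hSB b hb) _ (hSD d hd)
    exact this
  have hz : ζ - P ζ = 0 := by
    refine twoVarSub h F hF F' hF' SA SB SC SD hSA hSB hSC hSD hAB hd hc hCD hd' hc' _
      (G.sub_mem (hgG _) (hLG (hP1 ζ))) ?_ ?_
    · intro a ha c hc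
      rw [inner_sub_left, Complex.sub_im]
      have i1 : (⟪ζ, tp a c⟫_ℂ).im = 0 := by
        have j1 : ⟪ζ, tp a c⟫_ℂ = ⟪ω, X (tp a c)⟫_ℂ := by
          rw [sa_inner hgs, hgtp _ (hSA a ha) _ (hSC c hc), sa_inner hXs]
        obtain ⟨T, hT, hTs, rfl⟩ := hSA' a ha
        obtain ⟨S, hS, hSs, rfl⟩ := hSC' c hc
        have j2 : tp (T ω₁) (S ω₂) = tens tp T S ω := by rw [h.tens_apply]
        have hts : star (tens tp T S) = tens tp T S := by rw [h.tens_star, hTs, hSs]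
        have j3 : ⟪ω, X (tens tp T S ω)⟫_ℂ = ⟪X (tens tp T S ω), ω⟫_ℂ := by
          have : X (tens tp T S ω) = tens tp T S (X ω) := congrArg (fun A => A ω) (hX T hT S hS)
          rw [sa_inner hXs, sa_inner hts, this]
        rw [j1, j2]
        refine Complex.conj_eq_iff_im.1 ?_
        rw [inner_conj_symm, j3]
      have i2 : (⟪P ζ, tp a c⟫_ℂ).im = 0 := by
        have hcl : IsClosed {x : HK | (⟪x, tp a c⟫_ℂ).im = 0} :=
          isClosed_eq (Complex.continuous_im.comp (by fun_prop)) continuous_const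
        refine closure_minimal ?_ hcl (hP1 ζ)
        intro l hl
        change (⟪l, tp a c⟫_ℂ).im = 0
        induction hl using Submodule.span_induction with
        | mem x hx =>
          obtain ⟨b, hb, d, hd, rfl⟩ := hx
          have k1 := hAB a ha b hb
          have k2 := hCD c hc d hd
          rw [h.inner, ← inner_conj_symm b a, ← inner_conj_symm d c, Complex.mul_im,
            Complex.conj_im, Complex.conj_im, k1, k2]
          simp
        | zero => simp
        | add x y _ _ h1 h2 => rw [inner_add_left, Complex.add_im, h1, h2, add_zero]
        | smul r x _ h1 =>
          have : ⟪r • x, tp a c⟫_ℂ = (r : ℂ) * ⟪x, tp a c⟫_ℂ := by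
            rw [← Complex.coe_smul, inner_smul_left, Complex.conj_ofReal]
          rw [this, Complex.im_ofReal_mul, h1, mul_zero]
      rw [i1, i2, sub_zero]
    · intro b hb d hd
      rw [← inner_conj_symm, Complex.conj_re]
      exact hP2 ζ _ (Submodule.subset_span ⟨b, hb, d, hd, rfl⟩)
  have hζ : ζ ∈ closure (L : Set HK) := by
    rw [sub_eq_zero.1 hz]; exact hP1 ζ
  have hYζ : ⟪Y ω, ζ⟫_ℂ = ⟪Y ζ, ω⟫_ℂ := by
    have hcl : IsClosed {v : HK | ⟪Y ω, v⟫_ℂ = ⟪Y v, ω⟫_ℂ} :=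
      isClosed_eq (by fun_prop) (by fun_prop)
    refine closure_minimal ?_ hcl hζ
    intro l hl
    change ⟪Y ω, l⟫_ℂ = ⟪Y l, ω⟫_ℂ
    induction hl using Submodule.span_induction with
    | mem x hx =>
      obtain ⟨b, hb, d, hd, rfl⟩ := hx
      obtain ⟨T, hT, hTs, rfl⟩ := hSB' b hb
      obtain ⟨S, hS, hSs, rfl⟩ := hSD' d hd
      have j2 : tp (T ω₁) (S ω₂) = tens tp T S ω := by rw [h.tens_apply]
      have hts : star (tens tp T S) = tens tp T S := by rw [h.tens_star, hTs, hSs]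
      have : Y (tens tp T S ω) = tens tp T S (Y ω) := congrArg (fun A => A ω) (hY T hT S hS)
      rw [j2, this, sa_inner hts]
    | zero => simp
    | add x y _ _ h1 h2 => rw [inner_add_right, map_add, inner_add_left, h1, h2]
    | smul r x _ h1 =>
      rw [← Complex.coe_smul, map_smul, inner_smul_left, inner_smul_right, Complex.conj_ofReal, h1]
  have hgY : ∀ v, Y (g v) = g (Y v) := fun v => congrArg (fun A => A v) (hY e heM f hfN)
  have e1 : ⟪X (Y ω), ω⟫_ℂ = ⟪Y ω, ζ⟫_ℂ := by
    rw [sa_inner hXs, ← sa_inner hgs, ← hgY, hgω]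
  have e2 : ⟪Y (X ω), ω⟫_ℂ = ⟪Y ζ, ω⟫_ℂ := by
    rw [hgY, sa_inner hgs, hgω]
  change ⟪X (Y ω) - Y (X ω), ω⟫_ℂ = 0
  rw [inner_sub_left, e1, e2, hYζ, sub_self]

theorem tens_diag_zero (h : IsTP tp) (Z : HK →L[ℂ] HK)
    (hZ : ∀ x y, ⟪Z (tp x y), tp x y⟫_ℂ = 0) : Z = 0 := by
  -- polarization for a sesquilinear form
  have pol : ∀ {E : Type _} [AddCommGroup E] [Module ℂ E] (A B : E →ₗ[ℂ] HK),
      (∀ x, ⟪Z (A x), B x⟫_ℂ = 0) → ∀ x x', ⟪Z (A x), B x'⟫_ℂ = 0 := by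
    intro E _ _ A B hAB x x'
    have e1 := hAB (x + x')
    have e2 := hAB (x + Complex.I • x')
    simp only [map_add, map_smul, inner_add_left, inner_add_right, inner_smul_left,
      inner_smul_right, Complex.conj_I, hAB, mul_zero, add_zero, zero_add] at e1 e2
    generalize ⟪Z (A x), B x'⟫_ℂ = u at *
    generalize ⟪Z (A x'), B x⟫_ℂ = v at *
    have h3 : Complex.I * (2 * u) = 0 := by linear_combination Complex.I * e1 + e2
    rcases mul_eq_zero.1 h3 with h | h
    · exact absurd h Complex.I_ne_zero
    · simpa using h
  have pol' : ∀ (A B : K →ₗ[ℂ] HK),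
      (∀ x, ⟪Z (A x), B x⟫_ℂ = 0) → ∀ x x', ⟪Z (A x), B x'⟫_ℂ = 0 := by
    intro A B hAB x x'
    have e1 := hAB (x + x')
    have e2 := hAB (x + Complex.I • x')
    simp only [map_add, map_smul, inner_add_left, inner_add_right, inner_smul_left,
      inner_smul_right, Complex.conj_I, hAB, mul_zero, add_zero, zero_add] at e1 e2
    generalize ⟪Z (A x), B x'⟫_ℂ = u at *
    generalize ⟪Z (A x'), B x⟫_ℂ = v at *
    have h3 : Complex.I * (2 * u) = 0 := by linear_combination Complex.I * e1 + e2
    rcases mul_eq_zero.1 h3 with h | h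
    · exact absurd h Complex.I_ne_zero
    · simpa using h
  have s1 : ∀ x x' y, ⟪Z (tp x y), tp x' y⟫_ℂ = 0 := by
    intro x x' y
    exact pol (tp.flip y) (tp.flip y) (fun x => hZ x y) x x'
  have s2 : ∀ x x' y y', ⟪Z (tp x y), tp x' y'⟫_ℂ = 0 := by
    intro x x' y y'
    exact pol' (tp x) (tp x') (fun y => s1 x x' y) y y'
  refine h.ext fun x y => ?_
  rw [zero_apply]
  refine h.eq_zero fun x' y' => ?_
  rw [← inner_conj_symm, s2, map_zero]

theorem core_comm (h : IsTP tp) {M : Set (H →L[ℂ] H)} {N : Set (K →L[ℂ] K)}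
    (hM : Set.centralizer (Set.centralizer M) = M) (hMstar : ∀ T ∈ M, star T ∈ M)
    (hN : Set.centralizer (Set.centralizer N) = N) (hNstar : ∀ T ∈ N, star T ∈ N)
    (X Y : HK →L[ℂ] HK)
    (hX : ∀ T ∈ M, ∀ S ∈ N, X * tens tp T S = tens tp T S * X)
    (hY : ∀ T ∈ Set.centralizer M, ∀ S ∈ Set.centralizer N, Y * tens tp T S = tens tp T S * Y) :
    X * Y = Y * X := by
  have sa : ∀ X : HK →L[ℂ] HK, star X = X →
      (∀ T ∈ M, ∀ S ∈ N, X * tens tp T S = tens tp T S * X) → X * Y = Y * X := by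
    intro X hXs hX
    refine sub_eq_zero.1 (tens_diag_zero h _ fun x y => ?_)
    exact core_diag h hM hMstar hN hNstar X Y hXs hX hY x y
  have hX' : ∀ T ∈ M, ∀ S ∈ N, star X * tens tp T S = tens tp T S * star X := by
    intro T hT S hS
    have := congrArg star (hX _ (hMstar T hT) _ (hNstar S hS))
    rw [star_mul, star_mul, h.tens_star, star_star, star_star] at this
    exact this.symm
  have h1 := sa (X + star X) (by rw [star_add, star_star, add_comm]) (by
    intro T hT S hS
    rw [add_mul, mul_add, hX T hT S hS, hX' T hT S hS])
  have h2 := sa (Complex.I • (X - star X)) (by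
    rw [star_smul, star_sub, star_star]
    simp [smul_sub]
    abel) (by
    intro T hT S hS
    rw [smul_mul_assoc, mul_smul_comm, sub_mul, mul_sub, hX T hT S hS, hX' T hT S hS])
  have h3 : (X - star X) * Y = Y * (X - star X) := by
    rw [smul_mul_assoc, mul_smul_comm] at h2
    exact smul_right_injective _ Complex.I_ne_zero h2
  have h4 : (2 : ℂ) • (X * Y) = (2 : ℂ) • (Y * X) := by
    have := congrArg₂ (· + ·) h1 h3
    simp only [add_mul, mul_add, sub_mul, mul_sub] at this
    rw [two_smul, two_smul]
    calc X * Y + X * Y = X * Y + star X * Y + (X * Y - star X * Y) := by abel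
      _ = _ := this
      _ = _ := by abel
  exact smul_right_injective _ two_ne_zero h4

end core2

section signs

/-- `X` and `Y` commute up to the sign `(-1)^m`. -/
def Sc {R : Type*} [Ring R] [Algebra ℂ R] (m : ℕ) (X Y : R) : Prop :=
  X * Y = (-1 : ℂ) ^ m • (Y * X)

variable {R : Type*} [Ring R] [Algebra ℂ R] {m n : ℕ} {X Y Z A : R}

theorem sign_congr {m n : ℕ} (h : Even (m + n)) : (-1 : ℂ) ^ m = (-1 : ℂ) ^ n := by
  rcases Nat.even_or_odd m with hm | hm
  · rw [hm.neg_one_pow, ((Nat.even_add.1 h).1 hm).neg_one_pow]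
  · have : Odd n := by
      rw [← Nat.not_even_iff_odd] at hm ⊢
      exact fun hn => hm ((Nat.even_add.1 h).2 hn)
    rw [hm.neg_one_pow, this.neg_one_pow]

theorem Sc.congr (h : Sc m X Y) (hmn : Even (m + n)) : Sc n X Y := by
  rw [Sc, ← sign_congr hmn]
  exact h

theorem Sc.of_even (h : Sc m X Y) (hm : Even m) : Sc 0 X Y := h.congr (by simpa using hm)

theorem sc_zero : Sc 0 X Y ↔ X * Y = Y * X := by simp [Sc]

theorem Sc.symm (h : Sc m X Y) : Sc m Y X := by
  rw [Sc] at h ⊢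
  rw [h, smul_smul, ← pow_add, Even.neg_one_pow ⟨m, rfl⟩, one_smul]

theorem Sc.mul_right (h : Sc m X Y) (h' : Sc n X Z) : Sc (m + n) X (Y * Z) := by
  rw [Sc] at h h' ⊢
  rw [← mul_assoc, h, smul_mul_assoc, mul_assoc, h', mul_smul_comm, smul_smul, ← pow_add, mul_assoc]

theorem Sc.mul_left (h : Sc m X Z) (h' : Sc n Y Z) : Sc (m + n) (X * Y) Z :=
  (h.symm.mul_right h'.symm).symm

theorem sc_one : Sc 0 X 1 := by simp [Sc]

theorem sc_self : Sc 0 X X := by simp [Sc]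

theorem Sc.pow_right (h : Sc m X Y) (k : ℕ) : Sc (m * k) X (Y ^ k) := by
  induction k with
  | zero => simpa using sc_one
  | succ k ih => rw [pow_succ, mul_add, mul_one]; exact ih.mul_right h

theorem Sc.pow_left (h : Sc m X Y) (k : ℕ) : Sc (m * k) (X ^ k) Y := (h.symm.pow_right k).symm

theorem Sc.smul_right (h : Sc m X Y) (c : ℂ) : Sc m X (c • Y) := by
  rw [Sc] at h ⊢
  rw [mul_smul_comm, h, smul_mul_assoc, smul_comm]

theorem Sc.smul_left (h : Sc m X Y) (c : ℂ) : Sc m (c • X) Y := (h.symm.smul_right c).symm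

theorem Sc.add_right (h : Sc m X Y) (h' : Sc m X Z) : Sc m X (Y + Z) := by
  rw [Sc] at h h' ⊢
  rw [mul_add, h, h', add_mul, smul_add]

theorem Sc.add_left (h : Sc m X Z) (h' : Sc m Y Z) : Sc m (X + Y) Z :=
  (h.symm.add_right h'.symm).symm

theorem pow_mul_self_of_sq (hA : A * A = 1) (k : ℕ) : A ^ k * A ^ k = 1 := by
  rw [← (Commute.refl A).mul_pow, hA, one_pow]

theorem Sc.cancel_right (hA : A * A = 1) (k : ℕ) (h : Sc m X (Y * A ^ k)) (h' : Sc n X A) :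
    Sc (m + n * k) X Y := by
  have := h.mul_right (h'.pow_right k)
  rwa [mul_assoc, pow_mul_self_of_sq hA, mul_one] at this

/-- the homogeneous parts -/
def hpart (A : R) (j : ℕ) (X : R) : R := (2⁻¹ : ℂ) • (X + (-1 : ℂ) ^ j • (A * X * A))

theorem hpart_add (A X : R) : hpart A 0 X + hpart A 1 X = X := by
  simp only [hpart, pow_zero, one_smul, pow_one, neg_smul]
  rw [← smul_add]
  have : X + A * X * A + (X + -(A * X * A)) = (2 : ℂ) • X := by rw [two_smul]; abel
  rw [this, smul_smul]; norm_num

theorem hpart_sc (hA : A * A = 1) (j : ℕ) (X : R) : Sc j A (hpart A j X) := by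
  simp only [Sc, hpart, mul_smul_comm, smul_mul_assoc, mul_add, add_mul]
  rw [smul_comm ((-1 : ℂ) ^ j) (2⁻¹ : ℂ), smul_add ((-1 : ℂ) ^ j)]
  congr 1
  have e1 : A * (A * X * A) = X * A := by rw [← mul_assoc, ← mul_assoc, hA, one_mul]
  have e2 : A * X * A * A = A * X := by rw [mul_assoc, hA, mul_one]
  rw [smul_smul, ← pow_add, Even.neg_one_pow ⟨j, rfl⟩, one_smul, e1, e2, add_comm]

theorem hpart_sc' {B : R} (hAB : Sc 0 B A) (h : Sc m B X) (j : ℕ) : Sc m B (hpart A j X) := by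
  refine Sc.smul_right (h.add_right (Sc.smul_right ?_ _)) _
  simpa using (hAB.mul_right h).mul_right hAB

theorem hpart_mem {C : Set R} (hadd : ∀ x ∈ C, ∀ y ∈ C, x + y ∈ C)
    (hsmul : ∀ c : ℂ, ∀ x ∈ C, c • x ∈ C) (hA : ∀ x ∈ C, A * x * A ∈ C) (j : ℕ)
    (hX : X ∈ C) : hpart A j X ∈ C :=
  hsmul _ _ (hadd _ hX _ (hsmul _ _ (hA _ hX)))

theorem centralizer_ad {C : Set R} (hA : ∀ P ∈ C, ∃ m, Sc m A P) :
    ∀ X ∈ Set.centralizer C, A * X * A ∈ Set.centralizer C := by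
  intro X hX P hP
  obtain ⟨m, hm⟩ := hA P hP
  have h1 : Sc 0 X P := sc_zero.2 (hX P hP).symm
  have := (hm.mul_left h1).mul_left hm
  exact (sc_zero.1 (this.of_even ⟨m, by ring⟩)).symm

end signs

section fermi

variable {H K HK : Type*}
    [NormedAddCommGroup H] [InnerProductSpace ℂ H] [CompleteSpace H]
    [NormedAddCommGroup K] [InnerProductSpace ℂ K] [CompleteSpace K]
    [NormedAddCommGroup HK] [InnerProductSpace ℂ HK] [CompleteSpace HK]
    {tp : H →ₗ[ℂ] K →ₗ[ℂ] HK}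

theorem sc_of_parity {E : Type*} [NormedAddCommGroup E] [InnerProductSpace ℂ E]
    {U T : E →L[ℂ] E} (hU : U * U = 1) (s : Bool) :
    U * T * U = cond s (-T) T ↔ Sc (cond s 1 0) U T := by
  have hc : U * T * U * U = U * T := by rw [mul_assoc, hU, mul_one]
  constructor
  · intro h
    have h2 := congrArg (· * U) h
    simp only [hc] at h2
    cases s <;> simp [Sc, h2]
  · intro h
    rw [Sc] at h
    rw [h]
    cases s <;> simp [mul_assoc, hU]

theorem fermi_iff (h : IsTP tp) {U : H →L[ℂ] H} {V : K →L[ℂ] K} (hU : U * U = 1) (hV : V * V = 1)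
    {M : Set (H →L[ℂ] H)} {N : Set (K →L[ℂ] K)} (P : HK →L[ℂ] HK) :
    P ∈ fermiGen U V tp M N ↔ ∃ T ∈ M, ∃ S ∈ N, ∃ t s : ℕ, t < 2 ∧ s < 2 ∧ Sc t U T ∧ Sc s V S ∧
      P = tens tp (T * U ^ s) S := by
  constructor
  · rintro ⟨T, hT, S, hS, sT, sS, h1, h2, h3⟩
    refine ⟨T, hT, S, hS, cond sT 1 0, cond sS 1 0, by cases sT <;> simp, by cases sS <;> simp,
      (sc_of_parity hU _).1 h1, (sc_of_parity hV _).1 h2, ?_⟩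
    have hom : ∀ (x : H) (y : K) (sx : Bool), U x = cond sx (-x) x →
        P (tp x y) = tens tp (T * U ^ (cond sS 1 0)) S (tp x y) := by
      intro x y sx hx
      rw [h3 x y sx hx, h.tens_apply]
      cases sS <;> cases sx <;> simp_all
    refine h.ext fun x y => ?_
    have hUU : ∀ x, U (U x) = x := fun x => congrArg (fun A => A x) hU
    have hx : x = (2⁻¹ : ℂ) • (x + U x) + (2⁻¹ : ℂ) • (x - U x) := by
      rw [← smul_add]
      have : x + U x + (x - U x) = (2 : ℂ) • x := by rw [two_smul]; abel
      rw [this, smul_smul]; norm_num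
    rw [hx, map_add, LinearMap.add_apply, map_add, map_add,
      hom ((2⁻¹ : ℂ) • (x + U x)) y false (by simp [hUU, add_comm]),
      hom ((2⁻¹ : ℂ) • (x - U x)) y true (by simp [hUU, smul_sub])]
  · rintro ⟨T, hT, S, hS, t, s, ht, hs, h1, h2, rfl⟩
    have ht' : t = cond (decide (t = 1)) 1 0 := by
      interval_cases t <;> rfl
    have hs' : s = cond (decide (s = 1)) 1 0 := by
      interval_cases s <;> rfl
    refine ⟨T, hT, S, hS, decide (t = 1), decide (s = 1), (sc_of_parity hU _).2 (ht' ▸ h1),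
      (sc_of_parity hV _).2 (hs' ▸ h2), ?_⟩
    intro x y sx hx
    rw [h.tens_apply]
    clear ht' hs'
    interval_cases s <;> cases sx <;> simp [hx]

theorem twistedComm_hom {U : H →L[ℂ] H} (hU : U * U = 1)
    {M : Set (H →L[ℂ] H)} (hMU : ∀ T ∈ Set.centralizer M, U * T * U ∈ Set.centralizer M)
    {Q : H →L[ℂ] H} (hQ : Q ∈ twistedComm U M) {a : ℕ} (ha : a < 2) (hQa : Sc a U Q) :
    ∃ T ∈ Set.centralizer M, ∃ c : ℂ, Sc a U T ∧ Q = c • (U ^ a * T) := by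
  obtain ⟨T, hT, rfl⟩ := hQ
  have hp : ∀ j, hpart U j T ∈ Set.centralizer M := fun j =>
    hpart_mem (fun x hx y hy => Set.add_mem_centralizer hx hy)
      (fun c x hx => Set.smul_mem_centralizer c hx) hMU j hT
  have htw : twist U T = hpart U 0 T + Complex.I • (U * hpart U 1 T) := by
    simp only [twist, hpart, pow_zero, one_smul, pow_one, neg_smul, mul_smul_comm, smul_smul,
      sub_eq_add_neg, mul_comm]
  have s0 : Sc 0 U (hpart U 0 T) := hpart_sc hU 0 T
  have s1 : Sc 1 U (Complex.I • (U * hpart U 1 T)) := by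
    refine Sc.smul_right ?_ _
    simpa using sc_self.mul_right (hpart_sc hU 1 T)
  rw [htw] at hQa ⊢
  have two : ∀ Z : H →L[ℂ] H, Sc 0 U Z → Sc 1 U Z → Z = 0 := by
    intro Z h0 h1
    simp only [Sc, pow_zero, one_smul, pow_one, neg_smul] at h0 h1
    have h2 : U * Z = 0 := by
      have h3 : (2 : ℂ) • (U * Z) = 0 := by
        rw [two_smul]
        nth_rw 1 [h1]
        rw [h0]
        simp
      simpa using h3
    have := congrArg (U * ·) h2
    simpa [← mul_assoc, hU] using this
  interval_cases a
  · refine ⟨_, hp 0, 1, s0, ?_⟩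
    have : Complex.I • (U * hpart U 1 T) = 0 := by
      refine two _ ?_ s1
      have := hQa.add_right (s0.smul_right (-1))
      simpa using this
    rw [this]
    simp
  · refine ⟨_, hp 1, Complex.I, hpart_sc hU 1 T, ?_⟩
    have : hpart U 0 T = 0 := by
      refine two _ s0 ?_
      have := hQa.add_right (s1.smul_right (-1))
      simpa using this
    rw [this]
    simp

/-- conversely -/
theorem mem_twistedComm {U : H →L[ℂ] H} (hU : U * U = 1)
    {M : Set (H →L[ℂ] H)} {T : H →L[ℂ] H} (hT : T ∈ Set.centralizer M) {a : ℕ} (ha : a < 2)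
    (hTa : Sc a U T) : ∃ c : ℂ, c ≠ 0 ∧ c • (U ^ a * T) ∈ twistedComm U M := by
  interval_cases a
  · refine ⟨1, one_ne_zero, T, hT, ?_⟩
    have : U * T * U = T := by
      rw [sc_zero.1 hTa, mul_assoc, hU, mul_one]
    rw [twist, this, ← two_smul ℂ T, smul_smul]
    norm_num
  · refine ⟨Complex.I, Complex.I_ne_zero, T, hT, ?_⟩
    have : U * T * U = -T := by
      rw [Sc] at hTa
      rw [hTa, smul_mul_assoc, mul_assoc, hU, mul_one]; simp
    rw [twist, this, sub_neg_eq_add, ← two_smul ℂ T, add_neg_cancel, smul_zero, zero_add,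
      mul_smul_comm, smul_smul, pow_one]
    congr 1
    ring

end fermi

section final

variable {H K HK : Type*}
    [NormedAddCommGroup H] [InnerProductSpace ℂ H] [CompleteSpace H]
    [NormedAddCommGroup K] [InnerProductSpace ℂ K] [CompleteSpace K]
    [NormedAddCommGroup HK] [InnerProductSpace ℂ HK] [CompleteSpace HK]
    {tp : H →ₗ[ℂ] K →ₗ[ℂ] HK}

theorem IsTP.sc_tens (h : IsTP tp) {T T' : H →L[ℂ] H} {S S' : K →L[ℂ] K} {m n : ℕ}
    (h1 : Sc m T T') (h2 : Sc n S S') : Sc (m + n) (tens tp T S) (tens tp T' S') := by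
  rw [Sc] at h1 h2 ⊢
  rw [h.tens_mul, h.tens_mul, h1, h2, h.tens_smul_left, h.tens_smul_right, smul_smul, pow_add]

theorem sc_one_left {R : Type*} [Ring R] [Algebra ℂ R] {X : R} : Sc 0 1 X := by simp [Sc]

theorem twist_eq {E : Type*} [NormedAddCommGroup E] [InnerProductSpace ℂ E]
    (U T : E →L[ℂ] E) : twist U T = hpart U 0 T + Complex.I • (U * hpart U 1 T) := by
  simp only [twist, hpart, pow_zero, one_smul, pow_one, neg_smul, mul_smul_comm, smul_smul,
    sub_eq_add_neg, mul_comm]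

theorem twist_add {E : Type*} [NormedAddCommGroup E] [InnerProductSpace ℂ E]
    (U T T' : E →L[ℂ] E) : twist U (T + T') = twist U T + twist U T' := by
  simp only [twist, mul_add, add_mul, smul_add, mul_sub, smul_sub]
  abel

theorem twist_even {E : Type*} [NormedAddCommGroup E] [InnerProductSpace ℂ E]
    {U T : E →L[ℂ] E} (hU : U * U = 1) {m : ℕ} (hm : Even m) (h : Sc m U T) : twist U T = T := by
  have : U * T * U = T := by
    rw [sc_zero.1 (h.of_even hm), mul_assoc, hU, mul_one]
  rw [twist, this, ← two_smul ℂ T, smul_smul]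
  norm_num

theorem twist_odd {E : Type*} [NormedAddCommGroup E] [InnerProductSpace ℂ E]
    {U T : E →L[ℂ] E} (hU : U * U = 1) {m : ℕ} (hm : Odd m) (h : Sc m U T) :
    twist U T = Complex.I • (U * T) := by
  have : U * T * U = -T := by
    rw [Sc] at h
    rw [h, smul_mul_assoc, mul_assoc, hU, mul_one, hm.neg_one_pow]; simp
  rw [twist, this, sub_neg_eq_add, ← two_smul ℂ T, add_neg_cancel, smul_zero, zero_add,
    mul_smul_comm, smul_smul]
  congr 1
  ring

/-- If `X Z = (-1)^{|X||Z|} Z X` then `η(X)` and `Z` commute. -/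
theorem twist_comm {E : Type*} [NormedAddCommGroup E] [InnerProductSpace ℂ E]
    {W X Z : E →L[ℂ] E} (hW : W * W = 1) {p q : ℕ} (hX : Sc p W X) (hZ : Sc q W Z)
    (h : Sc (p * q) X Z) : Sc 0 (twist W X) Z := by
  rcases Nat.even_or_odd p with hp | hp
  · rw [twist_even hW hp hX]
    exact h.of_even (hp.mul_right q)
  · rw [twist_odd hW hp hX]
    refine Sc.smul_left ?_ _
    refine (hZ.mul_left h).of_even ?_
    have : q + p * q = (p + 1) * q := by ring
    rw [this]
    exact (hp.add_odd odd_one).mul_right q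

theorem centralizer_ind {R : Type*} [Ring R] [Algebra ℂ R] {C : Set R} {A B : R}
    (hA : A * A = 1) (hB : B * B = 1) (hAB : Sc 0 B A)
    (hCA : ∀ P ∈ C, ∃ m, Sc m A P) (hCB : ∀ P ∈ C, ∃ m, Sc m B P)
    (p : R → Prop) (hadd : ∀ x y, p x → p y → p (x + y))
    (hp : ∀ X ∈ Set.centralizer C, ∀ j k : ℕ, j < 2 → k < 2 → Sc j A X → Sc k B X → p X) :
    ∀ X ∈ Set.centralizer C, p X := by
  intro X hX
  have ha : ∀ x ∈ Set.centralizer C, ∀ y ∈ Set.centralizer C, x + y ∈ Set.centralizer C :=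
    fun x hx y hy => Set.add_mem_centralizer hx hy
  have hs : ∀ c : ℂ, ∀ x ∈ Set.centralizer C, c • x ∈ Set.centralizer C :=
    fun c x hx => Set.smul_mem_centralizer c hx
  have key : ∀ j k : ℕ, j < 2 → k < 2 → p (hpart A j (hpart B k X)) := by
    intro j k hj hk
    refine hp _ ?_ j k hj hk (hpart_sc hA _ _) (hpart_sc' hAB (hpart_sc hB _ _) _)
    exact hpart_mem ha hs (centralizer_ad hCA) j (hpart_mem ha hs (centralizer_ad hCB) k hX)
  have e : X = (hpart A 0 (hpart B 0 X) + hpart A 1 (hpart B 0 X)) +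
      (hpart A 0 (hpart B 1 X) + hpart A 1 (hpart B 1 X)) := by
    rw [hpart_add, hpart_add, hpart_add]
  rw [e]
  exact hadd _ _ (hadd _ _ (key 0 0 (by simp) (by simp)) (key 1 0 (by simp) (by simp)))
    (hadd _ _ (key 0 1 (by simp) (by simp)) (key 1 1 (by simp) (by simp)))

/-- commuting with homogeneous tensors suffices -/
theorem comm_of_hom (h : IsTP tp) {U : H →L[ℂ] H} {V : K →L[ℂ] K} (hU : U * U = 1) (hV : V * V = 1)
    {M : Set (H →L[ℂ] H)} {N : Set (K →L[ℂ] K)}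
    (hMU : ∀ T ∈ Set.centralizer M, U * T * U ∈ Set.centralizer M)
    (hNV : ∀ T ∈ Set.centralizer N, V * T * V ∈ Set.centralizer N) (x : HK →L[ℂ] HK)
    (h1 : ∀ T ∈ Set.centralizer M, ∀ t < 2, Sc t U T → Sc 0 x (tens tp T 1))
    (h2 : ∀ S ∈ Set.centralizer N, ∀ s < 2, Sc s V S → Sc 0 x (tens tp 1 S)) :
    ∀ T ∈ Set.centralizer M, ∀ S ∈ Set.centralizer N, x * tens tp T S = tens tp T S * x := by
  intro T hT S hS
  have hTS : tens tp T S = tens tp T 1 * tens tp 1 S := by rw [h.tens_mul, mul_one, one_mul]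
  have a1 : ∀ j < 2, Sc 0 x (tens tp (hpart U j T) 1) := fun j hj =>
    h1 _ (hpart_mem (fun x hx y hy => Set.add_mem_centralizer hx hy)
      (fun c x hx => Set.smul_mem_centralizer c hx) hMU j hT) j hj (hpart_sc hU j T)
  have a2 : ∀ j < 2, Sc 0 x (tens tp 1 (hpart V j S)) := fun j hj =>
    h2 _ (hpart_mem (fun x hx y hy => Set.add_mem_centralizer hx hy)
      (fun c x hx => Set.smul_mem_centralizer c hx) hNV j hS) j hj (hpart_sc hV j S)
  have b1 : Sc 0 x (tens tp T 1) := by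
    rw [← hpart_add U T, h.tens_add_left]
    exact (a1 0 (by simp)).add_right (a1 1 (by simp))
  have b2 : Sc 0 x (tens tp 1 S) := by
    rw [← hpart_add V S, h.tens_add_right]
    exact (a2 0 (by simp)).add_right (a2 1 (by simp))
  rw [hTS]
  exact sc_zero.1 (b1.mul_right b2)

theorem main_aux (h : IsTP tp)
    (U : H →L[ℂ] H) (hU : U * U = 1) (V : K →L[ℂ] K) (hV : V * V = 1)
    (M : Set (H →L[ℂ] H))
    (hM : Set.centralizer (Set.centralizer M) = M) (hMstar : ∀ T ∈ M, star T ∈ M)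
    (hMU : ∀ T ∈ M, U * T * U ∈ M)
    (N : Set (K →L[ℂ] K))
    (hN : Set.centralizer (Set.centralizer N) = N) (hNstar : ∀ S ∈ N, star S ∈ N)
    (hNV : ∀ T ∈ N, V * T * V ∈ N) :
    twist (tens tp U V) '' Set.centralizer (fermiGen U V tp M N) =
      Set.centralizer (Set.centralizer
        (fermiGen U V tp (twistedComm U M) (twistedComm V N))) := by
  set A := tens tp U 1 with hAdef
  set B := tens tp 1 V with hBdef
  set W := tens tp U V with hWdef
  set G := fermiGen U V tp M N with hGdef
  set G2 := fermiGen U V tp (twistedComm U M) (twistedComm V N) with hG2def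
  have hWAB : W = A * B := by rw [h.tens_mul, mul_one, one_mul]
  have hA : A * A = 1 := by rw [h.tens_mul, hU, mul_one, h.tens_one]
  have hB : B * B = 1 := by rw [h.tens_mul, hV, mul_one, h.tens_one]
  have hW : W * W = 1 := by rw [h.tens_mul, hU, hV, h.tens_one]
  have hBA : Sc 0 B A := h.sc_tens sc_one_left sc_one
  have hM1 : (1 : H →L[ℂ] H) ∈ M := by rw [← hM]; exact Set.one_mem_centralizer
  have hN1 : (1 : K →L[ℂ] K) ∈ N := by rw [← hN]; exact Set.one_mem_centralizer
  have adc : ∀ {E : Type _} [NormedAddCommGroup E] [InnerProductSpace ℂ E]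
      {D : E →L[ℂ] E} {C : Set (E →L[ℂ] E)}, D * D = 1 → (∀ T ∈ C, D * T * D ∈ C) →
      ∀ T ∈ Set.centralizer C, D * T * D ∈ Set.centralizer C := by
    intro E _ _ D C hD hC T hT P hP
    have e := hT _ (hC P hP)
    have hx : ∀ a, D * (D * a) = a := fun a => by rw [← mul_assoc, hD, one_mul]
    have e2 := congrArg (fun a => D * a * D) e
    simp only [mul_assoc] at e2 ⊢
    rw [hx] at e2
    rw [e2, hD, mul_one]
  have adc' : ∀ {E : Type _} [NormedAddCommGroup E] [InnerProductSpace ℂ E]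
      {D : E →L[ℂ] E} {C : Set (E →L[ℂ] E)}, D * D = 1 → (∀ T ∈ C, D * T * D ∈ C) →
      ∀ T ∈ Set.centralizer C, D * T * D ∈ Set.centralizer C := by
    intro E _ _ D C hD hC T hT P hP
    have e := hT _ (hC P hP)
    have hx : ∀ a, D * (D * a) = a := fun a => by rw [← mul_assoc, hD, one_mul]
    have e2 := congrArg (fun a => D * a * D) e
    simp only [mul_assoc] at e2 ⊢
    rw [hx] at e2
    rw [e2, hD, mul_one]
  have hMU' := adc hU hMU
  have hNV' := adc' hV hNV
  have hMU'' := adc hU hMU'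
  have hNV'' := adc' hV hNV'
  have hGpar : ∀ P ∈ G, ∃ T ∈ M, ∃ S ∈ N, ∃ t s : ℕ, t < 2 ∧ s < 2 ∧ Sc t U T ∧ Sc s V S ∧
      P = tens tp T 1 * A ^ s * tens tp 1 S := by
    intro P hP
    obtain ⟨T, hT, S, hS, t, s, ht, hs, h1, h2, rfl⟩ := (fermi_iff h hU hV P).1 hP
    refine ⟨T, hT, S, hS, t, s, ht, hs, h1, h2, ?_⟩
    have : A ^ s = tens tp (U ^ s) 1 := by interval_cases s <;> simp [h.tens_one, hAdef]
    rw [this, h.tens_mul, h.tens_mul]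
    simp
  have hGof : ∀ T ∈ M, ∀ S ∈ N, ∀ t s : ℕ, t < 2 → s < 2 → Sc t U T → Sc s V S →
      tens tp T 1 * A ^ s * tens tp 1 S ∈ G := by
    intro T hT S hS t s ht hs h1 h2
    refine (fermi_iff h hU hV _).2 ⟨T, hT, S, hS, t, s, ht, hs, h1, h2, ?_⟩
    have : A ^ s = tens tp (U ^ s) 1 := by interval_cases s <;> simp [h.tens_one, hAdef]
    rw [this, h.tens_mul, h.tens_mul]
    simp
  have hG2par : ∀ P ∈ G2, ∃ T ∈ Set.centralizer M, ∃ S ∈ Set.centralizer N, ∃ a b : ℕ,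
      a < 2 ∧ b < 2 ∧ Sc a U T ∧ Sc b V S ∧ ∃ c : ℂ,
      P = c • (A ^ a * tens tp T 1 * A ^ b * (B ^ b * tens tp 1 S)) := by
    intro P hP
    obtain ⟨T, hT, S, hS, t, s, ht, hs, h1, h2, rfl⟩ := (fermi_iff h hU hV P).1 hP
    obtain ⟨T', hT', c, hT'a, rfl⟩ := twistedComm_hom hU hMU' hT ht h1
    obtain ⟨S', hS', d, hS'a, rfl⟩ := twistedComm_hom hV hNV' hS hs h2
    refine ⟨T', hT', S', hS', t, s, ht, hs, hT'a, hS'a, c * d, ?_⟩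
    have e1 : A ^ s = tens tp (U ^ s) 1 := by interval_cases s <;> simp [h.tens_one, hAdef]
    have e2 : A ^ t = tens tp (U ^ t) 1 := by interval_cases t <;> simp [h.tens_one, hAdef]
    have e3 : B ^ s = tens tp 1 (V ^ s) := by interval_cases s <;> simp [h.tens_one, hBdef]
    rw [e1, e2, e3, h.tens_mul, h.tens_mul, h.tens_mul, h.tens_mul, smul_mul_assoc,
      h.tens_smul_left, h.tens_smul_right, smul_smul]
    simp
  have hG2of : ∀ T ∈ Set.centralizer M, ∀ S ∈ Set.centralizer N, ∀ a b : ℕ, a < 2 → b < 2 →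
      Sc a U T → Sc b V S → ∃ c : ℂ, c ≠ 0 ∧
      c • (A ^ a * tens tp T 1 * A ^ b * (B ^ b * tens tp 1 S)) ∈ G2 := by
    intro T hT S hS t s ht hs h1 h2
    obtain ⟨c, hc, hcm⟩ := mem_twistedComm hU hT ht h1
    obtain ⟨d, hd, hdm⟩ := mem_twistedComm hV hS hs h2
    refine ⟨c * d, mul_ne_zero hc hd, (fermi_iff h hU hV _).2 ⟨_, hcm, _, hdm, t, s, ht, hs,
      Sc.smul_right ?_ _, Sc.smul_right ?_ _, ?_⟩⟩
    · simpa using (sc_self.pow_right t).mul_right h1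
    · simpa using (sc_self.pow_right s).mul_right h2
    have e1 : A ^ s = tens tp (U ^ s) 1 := by interval_cases s <;> simp [h.tens_one, hAdef]
    have e2 : A ^ t = tens tp (U ^ t) 1 := by interval_cases t <;> simp [h.tens_one, hAdef]
    have e3 : B ^ s = tens tp 1 (V ^ s) := by interval_cases s <;> simp [h.tens_one, hBdef]
    rw [e1, e2, e3, h.tens_mul, h.tens_mul, h.tens_mul, h.tens_mul, smul_mul_assoc,
      h.tens_smul_left, h.tens_smul_right, smul_smul]
    simp
  -- elementary sign rules
  have rAL : ∀ {T : H →L[ℂ] H} {t : ℕ}, Sc t U T → Sc t A (tens tp T 1) := fun hT =>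
    h.sc_tens hT sc_one
  have rAR : ∀ {S : K →L[ℂ] K}, Sc 0 A (tens tp 1 S) := fun {S} =>
    h.sc_tens sc_one sc_one_left
  have rBL : ∀ {T : H →L[ℂ] H}, Sc 0 B (tens tp T 1) := fun {S} =>
    h.sc_tens sc_one_left sc_one
  have rBR : ∀ {S : K →L[ℂ] K} {s : ℕ}, Sc s V S → Sc s B (tens tp 1 S) := fun hS =>
    (h.sc_tens sc_one hS).congr (by simp)
  have rLR : ∀ {T : H →L[ℂ] H} {S : K →L[ℂ] K}, Sc 0 (tens tp T 1) (tens tp 1 S) := fun {T S} =>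
    h.sc_tens sc_one sc_one_left
  have rLL : ∀ {T T' : H →L[ℂ] H}, T ∈ M → T' ∈ Set.centralizer M →
      Sc 0 (tens tp T 1) (tens tp T' 1) := fun hT hT' =>
    h.sc_tens (sc_zero.2 (hT' _ hT)) sc_one
  have rRR : ∀ {S S' : K →L[ℂ] K}, S ∈ N → S' ∈ Set.centralizer N →
      Sc 0 (tens tp 1 S) (tens tp 1 S') := fun hT hT' =>
    h.sc_tens sc_one (sc_zero.2 (hT' _ hT))
  have hGA : ∀ P ∈ G, ∃ t s : ℕ, Sc t A P ∧ Sc s B P := by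
    intro P hP
    obtain ⟨T, hT, S, hS, t, s, ht, hs, h1, h2, rfl⟩ := hGpar P hP
    refine ⟨t, s, ?_, ?_⟩
    · exact (((rAL h1).mul_right (sc_self.pow_right s)).mul_right rAR).congr ⟨t, by ring⟩
    · exact ((rBL.mul_right (hBA.pow_right s)).mul_right (rBR h2)).congr ⟨s, by ring⟩
  have hG2A : ∀ P ∈ G2, ∃ t s : ℕ, Sc t A P ∧ Sc s B P := by
    intro P hP
    obtain ⟨T, hT, S, hS, a, b, ha, hb, h1, h2, c, rfl⟩ := hG2par P hP
    refine ⟨a, b, Sc.smul_right ?_ _, Sc.smul_right ?_ _⟩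
    · exact ((((sc_self.pow_right a).mul_right (rAL h1)).mul_right
        (sc_self.pow_right b)).mul_right ((hBA.symm.pow_right b).mul_right rAR)).congr
          ⟨a, by ring⟩
    · exact ((((hBA.pow_right a).mul_right rBL).mul_right
        (hBA.pow_right b)).mul_right ((sc_self.pow_right b).mul_right (rBR h2))).congr
          ⟨b, by ring⟩
  have one0U : Sc 0 U 1 := sc_one
  have one0V : Sc 0 V 1 := sc_one
  refine Set.Subset.antisymm ?_ ?_
  · rintro _ ⟨X, hX, rfl⟩
    suffices hs : ∀ X ∈ Set.centralizer G, ∀ Z ∈ Set.centralizer G2, Sc 0 (twist W X) Z by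
      intro Z hZ
      exact (sc_zero.1 (hs X hX Z hZ)).symm
    clear hX X
    refine centralizer_ind hA hB hBA (fun P hP => (hGA P hP).imp fun t ⟨s, h1, _⟩ => h1)
      (fun P hP => let ⟨t, s, _, h2⟩ := hGA P hP; ⟨s, h2⟩) _ ?_ ?_
    · intro x y hx hy Z hZ
      rw [twist_add]
      exact (hx Z hZ).add_left (hy Z hZ)
    intro X hX j k hj hk hXA hXB
    refine centralizer_ind hA hB hBA (fun P hP => (hG2A P hP).imp fun t ⟨s, h1, _⟩ => h1)
      (fun P hP => let ⟨t, s, _, h2⟩ := hG2A P hP; ⟨s, h2⟩) _ ?_ ?_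
    · intro x y hx hy
      exact hx.add_right hy
    intro Z hZ j' k' hj' hk' hZA hZB
    have hx : ∀ T ∈ M, ∀ S ∈ N, (X * B ^ j) * tens tp T S = tens tp T S * (X * B ^ j) := by
      have := comm_of_hom h hU hV hMU'' hNV'' (X * B ^ j) ?_ ?_
      · rwa [hM, hN] at this
      · rw [hM]
        intro T hT t ht hTt
        have h1 : Sc 0 X (tens tp T 1) := by
          have := hX _ (hGof T hT 1 hN1 t 0 ht (by simp) hTt one0V)
          simp only [pow_zero, mul_one, h.tens_one] at this
          exact (sc_zero.2 this).symm
        exact (h1.mul_left (rBL.pow_left j)).congr (by simp)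
      · rw [hN]
        intro S hS s hs hSs
        have h1 : Sc 0 X (A ^ s * tens tp 1 S) := by
          have := hX _ (hGof 1 hM1 S hS 0 s (by simp) hs one0U hSs)
          simp only [h.tens_one, one_mul] at this
          exact (sc_zero.2 this).symm
        have h2 : Sc (j * s) X (tens tp 1 S) := by
          have := (hXA.symm.pow_right s).mul_right h1
          rwa [← mul_assoc, pow_mul_self_of_sq hA, one_mul] at this
        exact (h2.mul_left ((rBR hSs).pow_left j)).congr ⟨j * s, by ring⟩
    have hy : ∀ T ∈ Set.centralizer M, ∀ S ∈ Set.centralizer N,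
        (Z * A ^ j' * B ^ (j' + k')) * tens tp T S = tens tp T S * (Z * A ^ j' * B ^ (j' + k')) := by
      refine comm_of_hom h hU hV hMU' hNV' _ ?_ ?_
      · intro T hT a ha hTa
        have h1 : Sc 0 Z (A ^ a * tens tp T 1) := by
          obtain ⟨c, hc, hm⟩ := hG2of T hT 1 Set.one_mem_centralizer a 0 ha (by simp) hTa one0V
          simp only [pow_zero, mul_one, h.tens_one] at hm
          have h3 : Sc 0 Z (c • (A ^ a * tens tp T 1)) := (sc_zero.2 (hZ _ hm)).symm
          have h4 := h3.smul_right c⁻¹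
          rwa [smul_smul, inv_mul_cancel₀ hc, one_smul] at h4
        have h2 : Sc (j' * a) Z (tens tp T 1) := by
          have := (hZA.symm.pow_right a).mul_right h1
          rwa [← mul_assoc, pow_mul_self_of_sq hA, one_mul] at this
        exact ((h2.mul_left ((rAL hTa).pow_left j')).mul_left (rBL.pow_left _)).congr
          ⟨j' * a, by ring⟩
      · intro S hS b hb hSb
        have h1 : Sc 0 Z (A ^ b * (B ^ b * tens tp 1 S)) := by
          obtain ⟨c, hc, hm⟩ := hG2of 1 Set.one_mem_centralizer S hS 0 b (by simp) hb one0U hSb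
          simp only [pow_zero, one_mul, h.tens_one] at hm
          have h3 : Sc 0 Z (c • (A ^ b * (B ^ b * tens tp 1 S))) := (sc_zero.2 (hZ _ hm)).symm
          have h4 := h3.smul_right c⁻¹
          rwa [smul_smul, inv_mul_cancel₀ hc, one_smul] at h4
        have h2 := (hZA.symm.pow_right b).mul_right h1
        rw [← mul_assoc, pow_mul_self_of_sq hA, one_mul] at h2
        have h3 := (hZB.symm.pow_right b).mul_right h2
        rw [← mul_assoc, pow_mul_self_of_sq hB, one_mul] at h3
        exact ((h3.mul_left (rAR.pow_left j')).mul_left ((rBR hSb).pow_left (j' + k'))).congr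
          ⟨j' * b + k' * b, by ring⟩
    have hxy : Sc 0 (X * B ^ j) (Z * A ^ j' * B ^ (j' + k')) :=
      sc_zero.2 (core_comm h hM hMstar hN hNstar _ _ hx hy)
    have hBy : Sc (k' + 0 * j' + 0 * (j' + k')) B (Z * A ^ j' * B ^ (j' + k')) :=
      (hZB.mul_right (hBA.pow_right j')).mul_right (sc_self.pow_right _)
    have hXy := hxy.mul_left (hBy.pow_left j)
    rw [mul_assoc X, pow_mul_self_of_sq hB, mul_one] at hXy
    have hXZ := (hXy.cancel_right hB _ hXB.symm).cancel_right hA _ hXA.symm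
    have hWX : Sc (j + k) W X := by rw [hWAB]; exact hXA.mul_left hXB
    have hWZ : Sc (j' + k') W Z := by rw [hWAB]; exact hZA.mul_left hZB
    refine twist_comm hW hWX hWZ (hXZ.congr ?_)
    exact ⟨j * k' + k * j' + k * k' + j * j', by ring⟩
  · intro Z hZ
    -- `Z` commutes with all `η(P)`, `P ∈ G`
    have hZP : ∀ P ∈ G, ∃ p : ℕ, Sc p W P ∧ Sc 0 Z (W ^ p * P) := by
      intro P hP
      obtain ⟨T, hT, S, hS, t, s, ht, hs, h1, h2, hPeq⟩ := hGpar P hP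
      have pA : Sc t A P := by
        rw [hPeq]
        exact (((rAL h1).mul_right (sc_self.pow_right s)).mul_right rAR).congr ⟨t, by ring⟩
      have pB : Sc s B P := by
        rw [hPeq]
        exact ((rBL.mul_right (hBA.pow_right s)).mul_right (rBR h2)).congr ⟨s, by ring⟩
      have pW : Sc (t + s) W P := by rw [hWAB]; exact pA.mul_left pB
      refine ⟨t + s, pW, ?_⟩
      have : W ^ (t + s) * P ∈ Set.centralizer G2 := by
        intro Q hQ
        obtain ⟨T', hT', S', hS', a, b, ha, hb, h1', h2', c, rfl⟩ := hG2par Q hQ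
        refine sc_zero.1 (Sc.symm (Sc.smul_right ?_ c))
        have qP : Sc (t * a + 0 + t * b + s * a + s * b) P
            (A ^ a * tens tp T' 1 * A ^ b * (B ^ b * tens tp 1 S')) := by
          have q1 : Sc (t * a + s * a + 0) P (A ^ a * tens tp T' 1) := by
            have : Sc (s * a) P (tens tp T' 1) := by
              rw [hPeq]
              exact (((rLL hT hT').mul_left ((rAL h1').pow_left s)).mul_left rLR.symm).congr
                ⟨s * a, by ring⟩
            exact ((pA.symm.pow_right a).mul_right this).congr ⟨t * a + s * a, by ring⟩
          have q2 : Sc (s * b) P (B ^ b * tens tp 1 S') := by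
            have : Sc 0 P (tens tp 1 S') := by
              rw [hPeq]
              exact ((rLR.mul_left (rAR.pow_left s)).mul_left (rRR hS hS')).congr (by simp)
            exact (pB.symm.pow_right b).mul_right this
          exact ((q1.mul_right (pA.symm.pow_right b)).mul_right q2).congr
            ⟨t * a + t * b + s * a + s * b, by ring⟩
        have qA : Sc a A (A ^ a * tens tp T' 1 * A ^ b * (B ^ b * tens tp 1 S')) :=
          ((((sc_self.pow_right a).mul_right (rAL h1')).mul_right
            (sc_self.pow_right b)).mul_right ((hBA.symm.pow_right b).mul_right rAR)).congr
              ⟨a, by ring⟩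
        have qB : Sc b B (A ^ a * tens tp T' 1 * A ^ b * (B ^ b * tens tp 1 S')) :=
          ((((hBA.pow_right a).mul_right rBL).mul_right
            (hBA.pow_right b)).mul_right ((sc_self.pow_right b).mul_right (rBR h2'))).congr
              ⟨b, by ring⟩
        have qW : Sc (a + b) W (A ^ a * tens tp T' 1 * A ^ b * (B ^ b * tens tp 1 S')) := by
          rw [hWAB]; exact qA.mul_left qB
        exact ((qW.pow_left (t + s)).mul_left qP).congr
          ⟨t * a + t * b + s * a + s * b, by ring⟩
      exact (sc_zero.2 (hZ _ this)).symm
    set Z0 := hpart W 0 Z with hZ0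
    set Z1 := hpart W 1 Z with hZ1
    have w0 : Sc 0 W Z0 := hpart_sc hW 0 Z
    have w1 : Sc 1 W Z1 := hpart_sc hW 1 Z
    have w1' : Sc 1 W ((-Complex.I) • (W * Z1)) :=
      Sc.smul_right ((sc_self.mul_right w1).congr (by decide)) _
    refine ⟨Z0 + (-Complex.I) • (W * Z1), ?_, ?_⟩
    · intro P hP
      obtain ⟨p, hWP, hZp⟩ := hZP P hP
      have hWp : Sc p W (W ^ p * P) := ((sc_self.pow_right p).mul_right hWP).congr ⟨p, by ring⟩
      have hWZW : Sc 0 (W * Z * W) (W ^ p * P) :=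
        ((hWp.mul_left hZp).mul_left hWp).of_even ⟨p, by ring⟩
      have hj : ∀ j, Sc 0 (hpart W j Z) (W ^ p * P) := fun j =>
        (hZp.add_left (hWZW.smul_left _)).smul_left _
      have c0 : Sc 0 Z0 P := by
        have := (w0.symm.pow_right p).mul_right (hj 0)
        rw [← mul_assoc, pow_mul_self_of_sq hW, one_mul] at this
        exact this.congr (by simp)
      have c1 : Sc p Z1 P := by
        have := (w1.symm.pow_right p).mul_right (hj 1)
        rw [← mul_assoc, pow_mul_self_of_sq hW, one_mul] at this
        exact this.congr ⟨p, by ring⟩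
      have c2 : Sc 0 (W * Z1) P := (hWP.mul_left c1).of_even ⟨p, rfl⟩
      exact (sc_zero.1 (c0.add_left (c2.smul_left _))).symm
    · rw [twist_add, twist_even hW Even.zero w0, twist_odd hW odd_one w1', mul_smul_comm, smul_smul,
        ← mul_assoc, hW, one_mul]
      have : Complex.I * -Complex.I = 1 := by simp
      rw [this, one_smul, hZ0, hZ1, hpart_add]

end final

/-- Theorem 4.5, twisted commutation theorem for two factors.  Let `M`,
`N` be von Neumann algebras on `ℤ₂`-graded Hilbert spaces `(H, U)`, `(K, V)` with `UMU = M`,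
`VNV = N`.  Then, on the (completed) Hilbert tensor product `HK = H ⊗ K` graded by `U ⊗ V`,
the twisted commutant of the Fermi tensor product satisfies `(M ⊗̂ N)^≀ = M^≀ ⊗̂ N^≀`. -/
theorem statement16 {H K HK : Type*}
    [NormedAddCommGroup H] [InnerProductSpace ℂ H] [CompleteSpace H]
    [NormedAddCommGroup K] [InnerProductSpace ℂ K] [CompleteSpace K]
    [NormedAddCommGroup HK] [InnerProductSpace ℂ HK] [CompleteSpace HK]
    -- a realization `tp` of the Hilbert tensor product `H ⊗ K`
    (tp : H →ₗ[ℂ] K →ₗ[ℂ] HK)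
    (htp_inner : ∀ (x x' : H) (y y' : K), ⟪tp x y, tp x' y'⟫_ℂ = ⟪x, x'⟫_ℂ * ⟪y, y'⟫_ℂ)
    (htp_dense : Dense (Submodule.span ℂ {z : HK | ∃ x y, z = tp x y} : Set HK))
    -- the gradings
    (U : H →L[ℂ] H) (hUsa : star U = U) (hUunit : U * U = 1)
    (V : K →L[ℂ] K) (hVsa : star V = V) (hVunit : V * V = 1)
    (W : HK →L[ℂ] HK) (hW : ∀ (x : H) (y : K), W (tp x y) = tp (U x) (V y))
    -- the von Neumann algebras
    (M : Set (H →L[ℂ] H))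
    (hM : Set.centralizer (Set.centralizer M) = M) (hMstar : ∀ T ∈ M, star T ∈ M)
    (hMgrad : (fun T : H →L[ℂ] H => U * T * U) '' M = M)
    (N : Set (K →L[ℂ] K))
    (hN : Set.centralizer (Set.centralizer N) = N) (hNstar : ∀ S ∈ N, star S ∈ N)
    (hNgrad : (fun S : K →L[ℂ] K => V * S * V) '' N = N) :
    twistedComm W (Set.centralizer (Set.centralizer (fermiGen U V tp M N))) =
      Set.centralizer (Set.centralizer
        (fermiGen U V tp (twistedComm U M) (twistedComm V N))) := by
  have h : IsTP tp := ⟨htp_inner, htp_dense⟩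
  have hWt : W = tens tp U V := h.ext fun x y => by rw [hW, h.tens_apply]
  have hMU : ∀ T ∈ M, U * T * U ∈ M := fun T hT => by
    rw [← hMgrad]; exact ⟨T, hT, rfl⟩
  have hNV : ∀ T ∈ N, V * T * V ∈ N := fun T hT => by
    rw [← hNgrad]; exact ⟨T, hT, rfl⟩
  rw [twistedComm, Set.centralizer_centralizer_centralizer, hWt]
  exact main_aux h U hUunit V hVunit M hM hMstar hMU N hN hNstar hNV

end
end
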